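/- Let T = ⋃_{k=1}^L Tₖ be a compact set, where each Tₖ = { x ∈ ℝⁿ : f_{k,1}(x) = ⋯ = f_{k,m_{k,1}}(x) = 0, h_{k,1}(x) ≥ 0, …, h_{k,m_{k,2}}(x) ≥ 0 } is defined by real polynomials. If for each k the set Tₖ satisfies the positive definite Lagrange Hessian (PDLH) condition at every u ∈ ∂_cT ∩ ∂Tₖ, then conv(T) is SDP representable. -/

import Mathlib

open MvPolynomial Metric Set Pointwise Filter

noncomputable section

/-- `ℝⁿ` with the Euclidean norm. -/
abbrev Rn (n : ℕ) : Type := EuclideanSpace ℝ (Fin n)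

/-- A set `S ⊆ ℝⁿ` is SDP representable if it is the projection of a spectrahedron:
there are symmetric matrices `A₀, A i, B j` with
`S = { x | ∃ u, A₀ + Σ xᵢ Aᵢ + Σ uⱼ Bⱼ ⪰ 0 }`. -/
def IsSDPRepresentable {n : ℕ} (S : Set (Rn n)) : Prop :=
  ∃ (N d : ℕ) (A₀ : Matrix (Fin d) (Fin d) ℝ)
    (A : Fin n → Matrix (Fin d) (Fin d) ℝ) (B : Fin N → Matrix (Fin d) (Fin d) ℝ),
    A₀.IsSymm ∧ (∀ i, (A i).IsSymm) ∧ (∀ j, (B j).IsSymm) ∧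
    S = {x : Rn n | ∃ u : Fin N → ℝ,
      (A₀ + ∑ i, x i • A i + ∑ j, u j • B j).PosSemidef}

/-- Evaluation of a polynomial at a point of `ℝⁿ`. -/
def peval {n : ℕ} (g : MvPolynomial (Fin n) ℝ) (x : Rn n) : ℝ :=
  MvPolynomial.eval (fun i => x i) g

/-- The gradient `∇g(u)` of a polynomial. -/
def pgrad {n : ℕ} (g : MvPolynomial (Fin n) ℝ) (u : Rn n) : Fin n → ℝ :=
  fun i => MvPolynomial.eval (fun j => u j) (MvPolynomial.pderiv i g)

/-- The Hessian `∇²g(u)` of a polynomial. -/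
def phess {n : ℕ} (g : MvPolynomial (Fin n) ℝ) (u : Rn n) : Matrix (Fin n) (Fin n) ℝ :=
  Matrix.of fun i j =>
    MvPolynomial.eval (fun k => u k) (MvPolynomial.pderiv i (MvPolynomial.pderiv j g))

/-- A polynomial `g` is sos-concave if `-∇²g(x) = W(x)ᵀ W(x)` for some
(possibly nonsquare) matrix polynomial `W`. -/
def SosConcave {n : ℕ} (g : MvPolynomial (Fin n) ℝ) : Prop :=
  ∃ (k : ℕ) (W : Fin k → Fin n → MvPolynomial (Fin n) ℝ),
    ∀ i j, - MvPolynomial.pderiv i (MvPolynomial.pderiv j g) = ∑ l, W l i * W l j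

/-- `g` is quasi-concave at `u` : `-vᵀ∇²g(u)v ≥ 0` for every `v` with `∇g(u)ᵀv = 0`. -/
def QuasiConcaveAt {n : ℕ} (g : MvPolynomial (Fin n) ℝ) (u : Rn n) : Prop :=
  ∀ v : Fin n → ℝ, (∑ i, pgrad g u i * v i) = 0 →
    0 ≤ -(∑ i, ∑ j, v i * phess g u i j * v j)

/-- `g` is strictly quasi-concave at `u` : if `∇g(u) ≠ 0` then `-vᵀ∇²g(u)v > 0`
for all nonzero `v ⊥ ∇g(u)`; if `∇g(u) = 0` then `-∇²g(u)` is positive definite. -/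
def StrictlyQuasiConcaveAt {n : ℕ} (g : MvPolynomial (Fin n) ℝ) (u : Rn n) : Prop :=
  (pgrad g u ≠ 0 ∧ ∀ v : Fin n → ℝ, v ≠ 0 → (∑ i, pgrad g u i * v i) = 0 →
      0 < -(∑ i, ∑ j, v i * phess g u i j * v j)) ∨
  (pgrad g u = 0 ∧ (-(phess g u)).PosDef)

/-- The convex boundary `∂_c T` : points of `T` minimizing some unit linear functional. -/
def convexBoundary {n : ℕ} (T : Set (Rn n)) : Set (Rn n) :=
  {u ∈ T | ∃ l : Rn n, ‖l‖ = 1 ∧ ∀ x ∈ T, (∑ i, l i * u i) ≤ ∑ i, l i * x i}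

/-- `v` is a nonsingular point of `∂T` (w.r.t. defining polynomials `g`):
exactly one defining polynomial vanishes at `v`, with nonvanishing gradient. -/
def IsNonsingularBoundaryPoint {n m : ℕ} (g : Fin m → MvPolynomial (Fin n) ℝ)
    (T : Set (Rn n)) (v : Rn n) : Prop :=
  v ∈ frontier T ∧ ∃ i, peval (g i) v = 0 ∧ pgrad (g i) v ≠ 0 ∧
    ∀ j, peval (g j) v = 0 → j = i

/-- A polynomial is SOS if it is a finite sum of squares of polynomials. -/
def IsSOSPoly {n : ℕ} (p : MvPolynomial (Fin n) ℝ) : Prop :=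
  ∃ (k : ℕ) (q : Fin k → MvPolynomial (Fin n) ℝ), p = ∑ i, (q i) ^ 2

/-- The polynomial `δ² - ‖x - u‖²`. -/
def ballPoly {n : ℕ} (u : Rn n) (δ : ℝ) : MvPolynomial (Fin n) ℝ :=
  MvPolynomial.C (δ ^ 2) - ∑ i, (MvPolynomial.X i - MvPolynomial.C (u i)) ^ 2

/-- The family `h₁, …, h_{m₂}` extended by the ball polynomial `h_m(x) = δ² - ‖x-u‖²`. -/
def extFamily {n m2 : ℕ} (h : Fin m2 → MvPolynomial (Fin n) ℝ) (u : Rn n) (δ : ℝ) :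
    Fin (m2 + 1) → MvPolynomial (Fin n) ℝ :=
  Fin.snoc h (ballPoly u δ)

/-- The positive definite Lagrange Hessian (PDLH) condition at `u` with radius `δu`,
for the set `T = {x | f(x) = 0, h(x) ≥ 0}`. -/
def PDLHAt {n m1 m2 : ℕ} (f : Fin m1 → MvPolynomial (Fin n) ℝ)
    (h : Fin m2 → MvPolynomial (Fin n) ℝ) (T : Set (Rn n)) (u : Rn n) (δu : ℝ) : Prop :=
  ∀ l : Rn n, ‖l‖ = 1 → ∀ δ : ℝ, 0 < δ → δ ≤ δu →
    ∀ v ∈ T ∩ closedBall u δ,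
      (∀ x ∈ T ∩ closedBall u δ, (∑ i, l i * v i) ≤ ∑ i, l i * x i) →
      ∃ (lam : Fin m1 → ℝ) (mu : Fin (m2 + 1) → ℝ),
        (∀ j, 0 ≤ mu j) ∧
        (∀ j, mu j * peval (extFamily h u δ j) v = 0) ∧
        (∀ i, l i = (∑ k, lam k * pgrad (f k) v i) +
            ∑ j, mu j * pgrad (extFamily h u δ j) v i) ∧
        ∀ x ∈ closedBall u δ,
          (Matrix.of (fun i i' : Fin n =>
            -(∑ k, lam k * phess (f k) x i i') -
              ∑ j, mu j * phess (extFamily h u δ j) x i i')).PosDef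

/-- `Z(g) ∩ ∂S` has strictly convex shape with respect to `S`. -/
def StrictlyConvexShape {n : ℕ} (g : MvPolynomial (Fin n) ℝ) (S : Set (Rn n)) : Prop :=
  ∃ Y U : Set (Rn n), IsOpen U ∧ Y = {x | peval g x = 0} ∩ U ∧
    {x | peval g x = 0} ∩ frontier S ⊆ Y ∧
    (∀ p ∈ closure Y, pgrad g p ≠ 0) ∧
    ∀ p ∈ closure Y,
      (∃ ε : ℝ, (ε = 1 ∨ ε = -1) ∧
        ∀ q ∈ S ∪ closure Y, ε * (∑ i, pgrad g p i * (q i - p i)) ≤ 0) ∧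
      ∀ q ∈ S ∪ closure Y, (∑ i, pgrad g p i * (q i - p i)) = 0 → q = p

/-! ### Part 1: abstract spectrahedra and their projections -/

/-- Abstract spectrahedra in a real vector space. -/
def Spec {V : Type} [AddCommGroup V] [Module ℝ V] (Q : Set V) : Prop :=
  ∃ (E : Type) (_ : AddCommGroup E) (_ : Module ℝ E) (_ : FiniteDimensional ℝ E)
    (b0 : E →ₗ[ℝ] E →ₗ[ℝ] ℝ) (b : V →ₗ[ℝ] E →ₗ[ℝ] E →ₗ[ℝ] ℝ),
    Q = {v | ∀ e, 0 ≤ b0 e e + b v e e}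

section SpecLemmas
variable {V W : Type} [AddCommGroup V] [Module ℝ V] [AddCommGroup W] [Module ℝ W]

theorem Spec.inter {Q R : Set V} (hQ : Spec Q) (hR : Spec R) : Spec (Q ∩ R) := by
  obtain ⟨E, _, _, _, b0, b, rfl⟩ := hQ
  obtain ⟨F, _, _, _, c0, c, rfl⟩ := hR
  refine ⟨E × F, inferInstance, inferInstance, inferInstance,
    b0.compl₁₂ (LinearMap.fst ℝ E F) (LinearMap.fst ℝ E F) +
      c0.compl₁₂ (LinearMap.snd ℝ E F) (LinearMap.snd ℝ E F),
    { toFun := fun v => (b v).compl₁₂ (LinearMap.fst ℝ E F) (LinearMap.fst ℝ E F) +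
        (c v).compl₁₂ (LinearMap.snd ℝ E F) (LinearMap.snd ℝ E F)
      map_add' := ?_
      map_smul' := ?_ }, ?_⟩
  · intro x y
    refine LinearMap.ext fun e => LinearMap.ext fun e' => ?_
    simp; ring
  · intro r x
    refine LinearMap.ext fun e => LinearMap.ext fun e' => ?_
    simp
  · ext v
    simp only [mem_inter_iff, mem_ofPred_eq]
    constructor
    · rintro ⟨h1, h2⟩ ⟨e, f⟩
      have := h1 e
      have := h2 f
      simp
      linarith
    · intro h
      refine ⟨fun e => ?_, fun f => ?_⟩
      · simpa using h (e, 0)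
      · simpa using h (0, f)

theorem Spec.comap {Q : Set V} (hQ : Spec Q) (φ : W →ₗ[ℝ] V) : Spec (φ ⁻¹' Q) := by
  obtain ⟨E, _, _, _, b0, b, rfl⟩ := hQ
  exact ⟨E, inferInstance, inferInstance, inferInstance, b0, b.comp φ, rfl⟩

theorem Spec.univ : Spec (Set.univ : Set V) :=
  ⟨ℝ, inferInstance, inferInstance, inferInstance, 0, 0, by simp⟩

theorem Spec.halfspace (k : ℝ) (φ : V →ₗ[ℝ] ℝ) : Spec {v | 0 ≤ k + φ v} := by
  refine ⟨ℝ, inferInstance, inferInstance, inferInstance, k • LinearMap.mul ℝ ℝ,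
    { toFun := fun v => φ v • LinearMap.mul ℝ ℝ
      map_add' := fun x y => by rw [map_add, add_smul]
      map_smul' := fun r x => by rw [map_smul, smul_eq_mul, mul_smul]; rfl }, ?_⟩
  ext v
  simp only [mem_ofPred_eq]
  constructor
  · intro h e
    have := mul_nonneg h (mul_self_nonneg e)
    simp
    linarith
  · intro h
    simpa using h 1

theorem Spec.forall {ι : Type} [Finite ι] {Q : ι → Set V} (h : ∀ i, Spec (Q i)) :
    Spec {v | ∀ i, v ∈ Q i} := by
  classical
  have := Fintype.ofFinite ι
  have key : ∀ s : Finset ι, Spec {v | ∀ i ∈ s, v ∈ Q i} := by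
    intro s
    induction s using Finset.induction_on with
    | empty => simpa using Spec.univ
    | insert a s _ ih =>
      convert (h a).inter ih using 1
      ext v; simp
  simpa using key Finset.univ

theorem Spec.eqn {n : ℕ} (φ : V →ₗ[ℝ] Rn n) (k : Rn n) : Spec {v | φ v = k} := by
  have h1 : ∀ i, Spec {v | 0 ≤ -(k i) + ((EuclideanSpace.proj i : Rn n →L[ℝ] ℝ).toLinearMap ∘ₗ φ) v} :=
    fun i => Spec.halfspace _ _
  have h2 : ∀ i, Spec {v | 0 ≤ k i + (-((EuclideanSpace.proj i : Rn n →L[ℝ] ℝ).toLinearMap ∘ₗ φ)) v} :=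
    fun i => Spec.halfspace _ _
  convert (Spec.forall h1).inter (Spec.forall h2) using 1
  ext v
  simp only [mem_ofPred_eq, mem_inter_iff]
  constructor
  · rintro h
    simp [h]
  · rintro ⟨h1, h2⟩
    ext i
    have a := h1 i
    have b := h2 i
    simp at a b
    linarith

end SpecLemmas

/-- Homogenization-friendly definition of projected spectrahedra in `ℝⁿ`. -/
def SRep {n : ℕ} (S : Set (Rn n)) : Prop :=
  ∃ (V : Type) (_ : AddCommGroup V) (_ : Module ℝ V) (Q : Set V) (f : V →ₗ[ℝ] Rn n) (c : Rn n),
    Spec Q ∧ S = (fun v => c + f v) '' Q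

theorem SRep.inter {n : ℕ} {S T : Set (Rn n)} (hS : SRep S) (hT : SRep T) : SRep (S ∩ T) := by
  obtain ⟨V, _, _, Q, f, c, hQ, rfl⟩ := hS
  obtain ⟨W, _, _, R, g, d, hR, rfl⟩ := hT
  refine ⟨V × W, inferInstance, inferInstance,
    (LinearMap.fst ℝ V W ⁻¹' Q ∩ LinearMap.snd ℝ V W ⁻¹' R) ∩
      {v | (f ∘ₗ LinearMap.fst ℝ V W - g ∘ₗ LinearMap.snd ℝ V W) v = d - c},
    f ∘ₗ LinearMap.fst ℝ V W, c,
    ((hQ.comap _).inter (hR.comap _)).inter (Spec.eqn _ _), ?_⟩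
  ext x
  simp only [mem_inter_iff, mem_image, mem_ofPred_eq, mem_preimage, Prod.exists]
  constructor
  · rintro ⟨⟨v, hv, rfl⟩, ⟨w, hw, h⟩⟩
    refine ⟨v, w, ⟨⟨hv, hw⟩, ?_⟩, rfl⟩
    simp
    rw [sub_eq_sub_iff_add_eq_add, add_comm, ← h, add_comm]
  · rintro ⟨v, w, ⟨⟨hv, hw⟩, h⟩, rfl⟩
    simp at h
    refine ⟨⟨v, hv, rfl⟩, w, hw, ?_⟩
    rw [sub_eq_sub_iff_add_eq_add] at h
    simp
    rw [add_comm c, h]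

theorem SRep.univ {n : ℕ} : SRep (Set.univ : Set (Rn n)) :=
  ⟨Rn n, inferInstance, inferInstance, Set.univ, LinearMap.id, 0, Spec.univ, by simp⟩

theorem SRep.singleton {n : ℕ} (x : Rn n) : SRep {x} :=
  ⟨Rn n, inferInstance, inferInstance, {v | LinearMap.id v = (0 : Rn n)}, LinearMap.id, x, Spec.eqn _ _, by
    ext y; simp [eq_comm]⟩

theorem SRep.empty {n : ℕ} : SRep (∅ : Set (Rn n)) :=
  ⟨Rn n, inferInstance, inferInstance, {v | 0 ≤ (-1 : ℝ) + (0 : Rn n →ₗ[ℝ] ℝ) v}, LinearMap.id, 0,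
    Spec.halfspace _ _, by
    ext y; norm_num⟩

theorem SRep.forall {n : ℕ} {ι : Type} (s : Finset ι) {S : ι → Set (Rn n)} (h : ∀ i ∈ s, SRep (S i)) :
    SRep {x | ∀ i ∈ s, x ∈ S i} := by
  classical
  induction s using Finset.induction_on with
  | empty => simpa using SRep.univ
  | insert a s _ ih =>
    convert (h a (by simp)).inter (ih fun i hi => h i (by simp [hi])) using 1
    ext v; simp

theorem Spec.convex {V : Type} [AddCommGroup V] [Module ℝ V] {Q : Set V} (hQ : Spec Q) :
    Convex ℝ Q := by
  obtain ⟨E, _, _, _, b0, b, rfl⟩ := hQ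
  intro v hv w hw s t hs ht hst e
  have h1 := mul_nonneg hs (hv e)
  have h2 := mul_nonneg ht (hw e)
  have : b0 e e = s * b0 e e + t * b0 e e := by rw [← add_mul, hst, one_mul]
  simp
  linarith

theorem SRep.convex {n : ℕ} {S : Set (Rn n)} (hS : SRep S) : Convex ℝ S := by
  obtain ⟨V, _, _, Q, f, c, hQ, rfl⟩ := hS
  have := (hQ.convex.linear_image f).vadd c
  have e : (fun v => c + f v) '' Q = c +ᵥ f '' Q := by
    rw [← Set.image_vadd, Set.image_image]; rfl
  rw [e]; exact this

theorem recession {n : ℕ} {S : Set (Rn n)} (hb : Bornology.IsBounded S) (x d : Rn n)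
    (h : ∀ s : ℝ, 0 ≤ s → x + s • d ∈ S) : d = 0 := by
  obtain ⟨C, hC⟩ := hb.exists_norm_le
  by_contra hd
  have hd' : 0 < ‖d‖ := norm_pos_iff.mpr hd
  have hC0 : 0 ≤ C := (norm_nonneg _).trans (hC _ (h 0 le_rfl))
  have hs : 0 ≤ (C + ‖x‖ + 1) / ‖d‖ := by positivity
  have h1 := hC _ (h _ hs)
  have h2 : ‖((C + ‖x‖ + 1) / ‖d‖) • d‖ = C + ‖x‖ + 1 := by
    rw [norm_smul, Real.norm_of_nonneg hs, div_mul_cancel₀ _ hd'.ne']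
  have h3 := norm_sub_le (x + ((C + ‖x‖ + 1) / ‖d‖) • d) x
  rw [add_sub_cancel_left, h2] at h3
  linarith

theorem SRep.convexJoin {n : ℕ} {S T : Set (Rn n)} (hS : SRep S) (hT : SRep T)
    (hSb : Bornology.IsBounded S) (hTb : Bornology.IsBounded T)
    (hSn : S.Nonempty) (hTn : T.Nonempty) : SRep (convexJoin ℝ S T) := by
  obtain ⟨V, _, _, Q, f, c, ⟨E, _, _, _, b0, b, rfl⟩, rfl⟩ := hS
  obtain ⟨W, _, _, R, g, d, ⟨F, _, _, _, e0, e, rfl⟩, rfl⟩ := hT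
  let pt : (ℝ × V × W) →ₗ[ℝ] ℝ := LinearMap.fst ℝ ℝ (V × W)
  let pv : (ℝ × V × W) →ₗ[ℝ] V := LinearMap.fst ℝ V W ∘ₗ LinearMap.snd ℝ ℝ (V × W)
  let pw : (ℝ × V × W) →ₗ[ℝ] W := LinearMap.snd ℝ V W ∘ₗ LinearMap.snd ℝ ℝ (V × W)
  have s1 : Spec {v : ℝ × V × W | ∀ x, 0 ≤ (0 : E →ₗ[ℝ] E →ₗ[ℝ] ℝ) x x +
      ((LinearMap.toSpanSingleton ℝ _ b0) ∘ₗ pt + b ∘ₗ pv) v x x} :=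
    ⟨E, inferInstance, inferInstance, inferInstance, _, _, rfl⟩
  have s2 : Spec {v : ℝ × V × W | ∀ x, 0 ≤ e0 x x +
      ((LinearMap.toSpanSingleton ℝ (F →ₗ[ℝ] F →ₗ[ℝ] ℝ) (-e0)) ∘ₗ pt + e ∘ₗ pw) v x x} :=
    ⟨F, inferInstance, inferInstance, inferInstance, _, _, rfl⟩
  have s3 : Spec {v : ℝ × V × W | 0 ≤ 0 + pt v} := Spec.halfspace _ _
  have s4 : Spec {v : ℝ × V × W | 0 ≤ 1 + (-pt) v} := Spec.halfspace _ _
  refine ⟨ℝ × V × W, inferInstance, inferInstance, _,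
    f ∘ₗ pv + g ∘ₗ pw + (LinearMap.toSpanSingleton ℝ _ (c - d)) ∘ₗ pt, d,
    ((s1.inter s2).inter s3).inter s4, ?_⟩
  ext x
  simp only [mem_convexJoin, mem_image, mem_inter_iff, mem_ofPred_eq, pt, pv, pw]
  constructor
  · rintro ⟨_, ⟨v, hv, rfl⟩, _, ⟨w, hw, rfl⟩, ⟨s, t, hs, ht, hst, rfl⟩⟩
    refine ⟨(s, s • v, t • w), ⟨⟨⟨fun x => ?_, fun x => ?_⟩, ?_⟩, ?_⟩, ?_⟩
    · have := mul_nonneg hs (hv x)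
      simp; linarith
    · have := mul_nonneg ht (hw x)
      obtain rfl : t = 1 - s := by linarith
      simp at this ⊢; linarith
    · simpa using hs
    · simp; linarith
    · obtain rfl : t = 1 - s := by linarith
      simp
      module
  · rintro ⟨⟨s, v, w⟩, ⟨⟨⟨h1, h2⟩, h3⟩, h4⟩, rfl⟩
    simp at h1 h2 h3 h4
    rcases eq_or_lt_of_le h3 with h0 | h0
    · subst h0
      obtain ⟨_, v0, hv0, rfl⟩ := hSn
      have hfv : f v = 0 := by
        refine recession hSb (c + f v0) (f v) fun s hs => ⟨v0 + s • v, fun x => ?_, ?_⟩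
        · have := mul_nonneg hs (h1 x)
          have := hv0 x
          simp at *; linarith
        · simp [add_assoc]
      refine ⟨_, ⟨v0, hv0, rfl⟩, _, ⟨w, fun x => ?_, rfl⟩, ?_⟩
      · simpa using h2 x
      · simp [hfv]
        exact right_mem_segment ℝ _ _
    rcases eq_or_lt_of_le h4 with h5 | h5
    · subst h5
      obtain ⟨_, v0, hv0, rfl⟩ := hTn
      have hfv : g w = 0 := by
        refine recession hTb (d + g v0) (g w) fun s hs => ⟨v0 + s • w, fun x => ?_, ?_⟩
        · have := mul_nonneg hs (h2 x)
          have := hv0 x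
          simp at *; linarith
        · simp [add_assoc]
      refine ⟨_, ⟨v, fun x => ?_, rfl⟩, _, ⟨v0, hv0, rfl⟩, ?_⟩
      · simpa using h1 x
      · convert left_mem_segment ℝ _ _ using 1
        simp [hfv]; abel
    have h6 : 0 < 1 - s := by linarith
    refine ⟨_, ⟨s⁻¹ • v, fun x => ?_, rfl⟩, _, ⟨(1 - s)⁻¹ • w, fun x => ?_, rfl⟩,
      ⟨s, 1 - s, h0.le, h6.le, by ring, ?_⟩⟩
    · have := mul_nonneg (inv_nonneg.mpr h0.le) (h1 x)
      rw [mul_add, inv_mul_cancel_left₀ h0.ne'] at this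
      simpa using this
    · have := mul_nonneg (inv_nonneg.mpr h6.le) (h2 x)
      have e1 : (1 - s)⁻¹ * (e0 x x + (-(s * e0 x x) + e w x x)) = e0 x x + (1 - s)⁻¹ * e w x x := by
        field_simp; ring
      rw [e1] at this
      simpa using this
    · simp only [map_smul, smul_add, smul_smul, mul_inv_cancel₀ h0.ne', mul_inv_cancel₀ h6.ne']
      simp
      module

theorem SRep.convexHull_union {n : ℕ} {S T : Set (Rn n)} (hS : SRep S) (hT : SRep T)
    (hSb : Bornology.IsBounded S) (hTb : Bornology.IsBounded T) :
    SRep (convexHull ℝ (S ∪ T)) := by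
  rcases S.eq_empty_or_nonempty with rfl | hSn
  · rw [Set.empty_union, hT.convex.convexHull_eq]; exact hT
  rcases T.eq_empty_or_nonempty with rfl | hTn
  · rw [Set.union_empty, hS.convex.convexHull_eq]; exact hS
  rw [hS.convex.convexHull_union hT.convex hSn hTn]
  exact hS.convexJoin hT hSb hTb hSn hTn

theorem SRep.convexHull_biUnion {n : ℕ} {ι : Type} (s : Finset ι) {S : ι → Set (Rn n)}
    (h : ∀ i ∈ s, SRep (S i)) (hb : ∀ i ∈ s, Bornology.IsBounded (S i)) :
    SRep (convexHull ℝ (⋃ i ∈ s, S i)) ∧ Bornology.IsBounded (convexHull ℝ (⋃ i ∈ s, S i)) := by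
  classical
  induction s using Finset.induction_on with
  | empty => simpa using SRep.empty
  | insert a s _ ih =>
    obtain ⟨i1, i2⟩ := ih (fun i hi => h i (by simp [hi])) (fun i hi => hb i (by simp [hi]))
    have e : convexHull ℝ (⋃ i ∈ insert a s, S i) =
        convexHull ℝ (S a ∪ convexHull ℝ (⋃ i ∈ s, S i)) := by
      rw [Finset.set_biUnion_insert]
      refine subset_antisymm (convexHull_mono (union_subset_union_right _ (subset_convexHull ℝ _)))
        (convexHull_min (union_subset ?_ ?_) (convex_convexHull ℝ _))
      · exact subset_union_left.trans (subset_convexHull ℝ _)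
      · exact convexHull_mono subset_union_right
    rw [e]
    have ha := h a (by simp)
    have hba := hb a (by simp)
    exact ⟨ha.convexHull_union i1 hba i2, (isBounded_convexHull).mpr (hba.union i2)⟩
/-! ### Part 2: from projected spectrahedra to `IsSDPRepresentable` -/

/-- Symmetrized Gram matrix of a bilinear form. -/
def symGram {E : Type} [AddCommGroup E] [Module ℝ E] {d : ℕ} (B : Fin d → E) :
    (E →ₗ[ℝ] E →ₗ[ℝ] ℝ) →ₗ[ℝ] Matrix (Fin d) (Fin d) ℝ where
  toFun β := Matrix.of fun i j => (β (B i) (B j) + β (B j) (B i)) / 2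
  map_add' β γ := by ext i j; simp; ring
  map_smul' r β := by ext i j; simp; ring

theorem symGram_isSymm {E : Type} [AddCommGroup E] [Module ℝ E] {d : ℕ} (B : Fin d → E)
    (β : E →ₗ[ℝ] E →ₗ[ℝ] ℝ) : (symGram B β).IsSymm := by
  ext i j; simp [symGram, add_comm]

theorem real_posSemidef_iff {d : Type} [Fintype d] (M : Matrix d d ℝ) :
    M.PosSemidef ↔ M.IsSymm ∧ ∀ x : d → ℝ, 0 ≤ ∑ i, ∑ j, x i * M i j * x j := by
  rw [Matrix.posSemidef_iff_dotProduct_mulVec]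
  have h1 : M.IsHermitian ↔ M.IsSymm := by
    simp [Matrix.IsHermitian, Matrix.IsSymm, Matrix.conjTranspose_eq_transpose_of_trivial]
  rw [h1]
  refine and_congr_right fun _ => forall_congr' fun x => ?_
  have : star x ⬝ᵥ M.mulVec x = ∑ i, ∑ j, x i * M i j * x j := by
    simp [dotProduct, Matrix.mulVec, Finset.mul_sum, mul_assoc]
  rw [this]

theorem symGram_posSemidef {E : Type} [AddCommGroup E] [Module ℝ E] {d : ℕ}
    (B : Module.Basis (Fin d) ℝ E) (β : E →ₗ[ℝ] E →ₗ[ℝ] ℝ) :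
    (symGram B β).PosSemidef ↔ ∀ e, 0 ≤ β e e := by
  rw [real_posSemidef_iff]
  have key : ∀ x : Fin d → ℝ, ∑ i, ∑ j, x i * symGram B β i j * x j =
      β (∑ i, x i • B i) (∑ i, x i • B i) := by
    intro x
    have h1 : β (∑ i, x i • B i) (∑ i, x i • B i) = ∑ i, ∑ j, x i * x j * β (B i) (B j) := by
      simp only [map_sum, LinearMap.sum_apply, map_smul, LinearMap.smul_apply, smul_eq_mul,
        Finset.mul_sum]
      rw [Finset.sum_comm]
      exact Finset.sum_congr rfl fun i _ => Finset.sum_congr rfl fun j _ => by ring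
    have h2 : ∑ i, ∑ j, x i * x j * β (B i) (B j) = ∑ i, ∑ j, x i * x j * β (B j) (B i) := by
      rw [Finset.sum_comm]
      exact Finset.sum_congr rfl fun i _ => Finset.sum_congr rfl fun j _ => by ring
    have h3 : ∑ i, ∑ j, x i * symGram B β i j * x j =
        (∑ i, ∑ j, x i * x j * β (B i) (B j)) / 2 + (∑ i, ∑ j, x i * x j * β (B j) (B i)) / 2 := by
      simp only [Finset.sum_div, ← Finset.sum_add_distrib]
      exact Finset.sum_congr rfl fun i _ => Finset.sum_congr rfl fun j _ => by
        simp [symGram]; ring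
    rw [h3, ← h2, h1]; ring
  constructor
  · rintro ⟨_, h⟩ e
    have := h (B.repr e)
    rw [key, B.sum_repr] at this
    exact this
  · intro h
    refine ⟨symGram_isSymm _ _, fun x => ?_⟩
    rw [key]; exact h _

theorem SRep.isSDPRepresentable {n : ℕ} {S : Set (Rn n)} (hS : SRep S) : IsSDPRepresentable S := by
  obtain ⟨V, _, _, Q, f, c, hQ, rfl⟩ := hS
  have hQ' := (hQ.comap (LinearMap.snd ℝ (Rn n) V)).inter
    (Spec.eqn (LinearMap.fst ℝ (Rn n) V - f ∘ₗ LinearMap.snd ℝ (Rn n) V) c)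
  obtain ⟨E, _, _, _, b0, b, hE⟩ := hQ'
  let B := Module.finBasis ℝ E
  let Ψ : V →ₗ[ℝ] Matrix (Fin (Module.finrank ℝ E)) (Fin (Module.finrank ℝ E)) ℝ :=
    symGram B ∘ₗ b ∘ₗ LinearMap.inr ℝ (Rn n) V
  let C := Module.finBasis ℝ (LinearMap.range Ψ)
  refine ⟨_, _, symGram B b0, fun i => symGram B (b (EuclideanSpace.single i 1, 0)),
    fun j => (C j : Matrix _ _ ℝ), symGram_isSymm _ _, fun i => symGram_isSymm _ _, fun j => ?_, ?_⟩
  · obtain ⟨v, hv⟩ := (C j).2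
    beta_reduce
    rw [← hv]; exact symGram_isSymm _ _
  · have key : ∀ (x : Rn n) (v : V), symGram B (b0 + b (x, v)) =
        symGram B b0 + ∑ i, x i • symGram B (b (EuclideanSpace.single i 1, 0)) + Ψ v := by
      intro x v
      have hx : (x, v) = ∑ i, x i • ((EuclideanSpace.single i (1 : ℝ) : Rn n), (0 : V)) + (0, v) := by
        have h0 : x = ∑ i, x i • (EuclideanSpace.single i (1 : ℝ) : Rn n) := by
          ext j; simp [Finset.sum_apply, Pi.single_apply]
        refine Prod.ext ?_ ?_
        · simpa [Prod.fst_sum] using h0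
        · simp [Prod.snd_sum]
      conv_lhs => rw [hx]
      simp only [map_add, map_sum, map_smul, Ψ]
      rw [← add_assoc]; rfl
    ext x
    simp only [mem_image, mem_ofPred_eq]
    have hmem : ∀ v, (v ∈ Q ∧ c + f v = x) ↔ (symGram B (b0 + b (x, v))).PosSemidef := by
      intro v
      have h1 := Set.ext_iff.mp hE (x, v)
      simp only [mem_inter_iff, mem_preimage, mem_ofPred_eq] at h1
      rw [symGram_posSemidef]
      simp only [LinearMap.add_apply] at h1 ⊢
      rw [← h1]
      simp only [LinearMap.snd_apply, LinearMap.sub_apply, LinearMap.fst_apply,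
        LinearMap.comp_apply]
      rw [sub_eq_iff_eq_add, eq_comm]
    simp only [hmem, key]
    constructor
    · rintro ⟨v, hv⟩
      refine ⟨C.repr ⟨Ψ v, v, rfl⟩, ?_⟩
      have := congrArg Subtype.val (C.sum_repr ⟨Ψ v, v, rfl⟩)
      simp only [Submodule.coe_sum, Submodule.coe_smul] at this
      rw [this]; exact hv
    · rintro ⟨u, hu⟩
      obtain ⟨v, hv⟩ := (∑ j, u j • C j).2
      refine ⟨v, ?_⟩
      rw [hv]
      simpa only [Submodule.coe_sum, Submodule.coe_smul] using hu
/-! ### Part 3: moment functionals on a small box and a Jensen type inequality -/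

/-- Truncated moment functionals for the box of radius `r` around `a`. -/
def Feas {n : ℕ} (a : Fin n → ℝ) (r : ℝ) (D : ℕ) (L : MvPolynomial (Fin n) ℝ →ₗ[ℝ] ℝ) : Prop :=
  L 1 = 1 ∧ (∀ q : MvPolynomial (Fin n) ℝ, q.totalDegree ≤ D → 0 ≤ L (q * q)) ∧
    ∀ i, ∀ q : MvPolynomial (Fin n) ℝ, q.totalDegree ≤ D →
      0 ≤ L ((C (r ^ 2) - (X i - C (a i)) ^ 2) * (q * q))

/-- `Q` acts (on low degree polynomials) as an operator of norm at most `c`. -/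
def OpB {n : ℕ} (L : MvPolynomial (Fin n) ℝ →ₗ[ℝ] ℝ) (D d : ℕ) (Q : MvPolynomial (Fin n) ℝ)
    (c : ℝ) : Prop :=
  Q.totalDegree ≤ d ∧ ∀ s : MvPolynomial (Fin n) ℝ, s.totalDegree + d ≤ D →
    L ((Q * s) * (Q * s)) ≤ c ^ 2 * L (s * s)

section OpBLemmas
variable {n : ℕ} {a : Fin n → ℝ} {r : ℝ} {D : ℕ} {L : MvPolynomial (Fin n) ℝ →ₗ[ℝ] ℝ}

theorem L_C_mul (L : MvPolynomial (Fin n) ℝ →ₗ[ℝ] ℝ) (k : ℝ) (p : MvPolynomial (Fin n) ℝ) :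
    L (C k * p) = k * L p := by
  rw [← MvPolynomial.smul_eq_C_mul, map_smul, smul_eq_mul]

theorem OpB.mono (hL : Feas a r D L) {d d' : ℕ} {Q : MvPolynomial (Fin n) ℝ} {c c' : ℝ}
    (h : OpB L D d Q c) (hd : d ≤ d') (hc : 0 ≤ c) (hcc : c ≤ c') : OpB L D d' Q c' := by
  refine ⟨h.1.trans hd, fun s hs => (h.2 s (by omega)).trans ?_⟩
  have := hL.2.1 s (by omega)
  gcongr

theorem Feas.mixed (hL : Feas a r D L) {A B : MvPolynomial (Fin n) ℝ} (hA : A.totalDegree ≤ D)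
    (hB : B.totalDegree ≤ D) (x y : ℝ) :
    2 * (x * y) * L (A * B) ≤ x ^ 2 * L (A * A) + y ^ 2 * L (B * B) := by
  have hd : (C x * A - C y * B).totalDegree ≤ D := by
    refine (totalDegree_sub _ _).trans (max_le ?_ ?_)
    · refine (totalDegree_mul _ _).trans ?_
      rw [totalDegree_C, zero_add]; exact hA
    · refine (totalDegree_mul _ _).trans ?_
      rw [totalDegree_C, zero_add]; exact hB
  have h := hL.2.1 _ hd
  have e : (C x * A - C y * B) * (C x * A - C y * B) =
      C (x ^ 2) * (A * A) - C (2 * (x * y)) * (A * B) + C (y ^ 2) * (B * B) := by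
    simp only [C_pow, C_mul]
    rw [show (C (2 : ℝ) : MvPolynomial (Fin n) ℝ) = 2 from rfl]
    ring
  rw [e, map_add, map_sub, L_C_mul, L_C_mul, L_C_mul] at h
  linarith

theorem deg_mul_le {p q : MvPolynomial (Fin n) ℝ} {a c : ℕ} (hp : p.totalDegree ≤ a)
    (hq : q.totalDegree + a ≤ c) : (p * q).totalDegree ≤ c :=
  (totalDegree_mul _ _).trans (by omega)

theorem OpB.add (hL : Feas a r D L) {d : ℕ} {P Q : MvPolynomial (Fin n) ℝ} {b c : ℝ}
    (hP : OpB L D d P b) (hQ : OpB L D d Q c) (hb : 0 < b) (hc : 0 < c) :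
    OpB L D d (P + Q) (b + c) := by
  refine ⟨(totalDegree_add _ _).trans (max_le hP.1 hQ.1), fun s hs => ?_⟩
  have h1 := hP.2 s hs
  have h2 := hQ.2 s hs
  have h3 := hL.mixed (deg_mul_le hP.1 hs) (deg_mul_le hQ.1 hs) c b
  have h4 : L (P * s * (Q * s)) ≤ c * b * L (s * s) := by
    have hcb : 0 < 2 * (c * b) := by positivity
    refine le_of_mul_le_mul_left (h3.trans ?_) hcb
    have := mul_le_mul_of_nonneg_left h1 (sq_nonneg c)
    have := mul_le_mul_of_nonneg_left h2 (sq_nonneg b)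
    linarith
  have e : (P + Q) * s * ((P + Q) * s) =
      P * s * (P * s) + 2 • (P * s * (Q * s)) + Q * s * (Q * s) := by
    rw [two_smul]; ring
  rw [e, map_add, map_add, map_nsmul, nsmul_eq_mul]
  push_cast
  linarith

theorem OpB.C_mul {d : ℕ} {Q : MvPolynomial (Fin n) ℝ} {c : ℝ} (k : ℝ)
    (hQ : OpB L D d Q c) : OpB L D d (C k * Q) (|k| * c) := by
  refine ⟨(totalDegree_mul _ _).trans (by rw [totalDegree_C, zero_add]; exact hQ.1),
    fun s hs => ?_⟩
  have h1 := mul_le_mul_of_nonneg_left (hQ.2 s hs) (sq_nonneg k)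
  have e : C k * Q * s * (C k * Q * s) = C (k ^ 2) * (Q * s * (Q * s)) := by
    rw [C_pow]; ring
  rw [e, L_C_mul, mul_pow, sq_abs]
  linarith

theorem OpB.const (d : ℕ) (k : ℝ) : OpB L D d (C k) |k| := by
  refine ⟨by rw [totalDegree_C]; omega, fun s hs => ?_⟩
  have e : C k * s * (C k * s) = C (k ^ 2) * (s * s) := by
    rw [C_pow]; ring
  rw [e, L_C_mul, sq_abs]

theorem OpB.w_mul (hL : Feas a r D L) {d : ℕ} {Q : MvPolynomial (Fin n) ℝ} {c : ℝ} (k : Fin n)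
    (hQ : OpB L D d Q c) : OpB L D (d + 1) ((X k - C (a k)) * Q) (r * c) := by
  have hw : (X k - C (a k) : MvPolynomial (Fin n) ℝ).totalDegree ≤ 1 := by
    refine (totalDegree_sub _ _).trans (max_le ?_ ?_)
    · rw [totalDegree_X]
    · rw [totalDegree_C]; omega
  refine ⟨(totalDegree_mul _ _).trans (by have := hQ.1; omega), fun s hs => ?_⟩
  have h1 := mul_le_mul_of_nonneg_left (hQ.2 s (by omega)) (sq_nonneg r)
  have h2 := hL.2.2 k (Q * s) (deg_mul_le hQ.1 (by omega))
  have e : (X k - C (a k)) * Q * s * ((X k - C (a k)) * Q * s) =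
      C (r ^ 2) * (Q * s * (Q * s)) - (C (r ^ 2) - (X k - C (a k)) ^ 2) * (Q * s * (Q * s)) := by
    ring
  rw [e, map_sub, L_C_mul, mul_pow]
  linarith

theorem OpB.abs_le (hL : Feas a r D L) {d : ℕ} {Q : MvPolynomial (Fin n) ℝ} {c : ℝ}
    (hQ : OpB L D d Q c) (hc : 0 < c) {s t : MvPolynomial (Fin n) ℝ} (hs : s.totalDegree + d ≤ D)
    (ht : t.totalDegree ≤ D) : |L (s * t * Q)| ≤ c / 2 * (L (s * s) + L (t * t)) := by
  have h1 := hQ.2 s hs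
  have hQs := deg_mul_le hQ.1 hs
  have h2 := hL.mixed hQs ht 1 c
  have h3 := hL.mixed hQs ht 1 (-c)
  have e : s * t * Q = Q * s * t := by ring
  rw [e, _root_.abs_le]
  constructor
  · refine le_of_mul_le_mul_left (a := 2 * c) ?_ (by positivity)
    nlinarith
  · refine le_of_mul_le_mul_left (a := 2 * c) ?_ (by positivity)
    nlinarith

end OpBLemmas

theorem eval_close {n : ℕ} (a : Fin n → ℝ) {ι : Type} [Finite ι] (p : ι → MvPolynomial (Fin n) ℝ)
    {ε : ℝ} (hε : 0 < ε) : ∃ ρ > 0, ∀ v : Fin n → ℝ, (∀ i, |v i - a i| ≤ ρ) →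
      ∀ j, |eval v (p j) - eval a (p j)| ≤ ε := by
  have h : ∀ᶠ v in nhds a, ∀ j, |eval v (p j) - eval a (p j)| ≤ ε := by
    rw [Filter.eventually_all]
    intro j
    have hc : ContinuousAt (fun v : Fin n → ℝ => eval v (p j)) a :=
      (MvPolynomial.continuous_eval (p j)).continuousAt
    filter_upwards [Metric.tendsto_nhds.mp hc ε hε] with v hv
    rw [Real.dist_eq] at hv
    exact hv.le
  obtain ⟨ρ, hρ, hb⟩ := Metric.eventually_nhds_iff.mp h
  refine ⟨ρ / 2, by positivity, fun v hv => hb ?_⟩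
  refine lt_of_le_of_lt ((dist_pi_le_iff (by positivity)).mpr fun i => ?_) (half_lt_self hρ)
  rw [Real.dist_eq]; exact hv i

/-- Second order expansion with remainder controlled in operator norm. -/
theorem taylor_op {n : ℕ} (a : Fin n → ℝ) (p : MvPolynomial (Fin n) ℝ) :
    ∃ (q : Fin n → Fin n → ℝ) (d : ℕ),
      (∀ i j, q i j + q j i = eval a (pderiv i (pderiv j p))) ∧
      ∀ ε > 0, ∃ r0 > 0, ∀ r, 0 < r → r ≤ r0 → ∀ v : Fin n → ℝ, (∀ i, |v i - a i| ≤ r) →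
        ∃ Q : Fin n → Fin n → MvPolynomial (Fin n) ℝ,
          p = C (eval v p) + ∑ i, C (eval v (pderiv i p)) * (X i - C (v i)) +
            ∑ i, ∑ j, (X i - C (v i)) * (X j - C (v j)) * Q i j ∧
          ∀ D L, Feas a r D L → ∀ i j, OpB L D d (Q i j - C (q i j)) ε := by
  induction p using MvPolynomial.induction_on with
  | C k =>
    refine ⟨0, 0, by simp, fun ε hε => ⟨1, one_pos, fun r _ _ v _ => ⟨0, by simp, ?_⟩⟩⟩
    intro D L hL i j
    have := (OpB.const (L := L) (D := D) 0 0).mono hL le_rfl (abs_nonneg _) (by simpa using hε.le)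
    simpa using this
  | add p p' ih ih' =>
    obtain ⟨q, d, hq, h⟩ := ih
    obtain ⟨q', d', hq', h'⟩ := ih'
    refine ⟨fun i j => q i j + q' i j, max d d', fun i j => ?_, fun ε hε => ?_⟩
    · simp only [map_add, ← hq, ← hq']; ring
    obtain ⟨r0, hr0, h⟩ := h (ε / 2) (by positivity)
    obtain ⟨r0', hr0', h'⟩ := h' (ε / 2) (by positivity)
    refine ⟨min r0 r0', lt_min hr0 hr0', fun r hr hr' v hv => ?_⟩
    obtain ⟨Q, hQ, hB⟩ := h r hr (hr'.trans (min_le_left _ _)) v hv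
    obtain ⟨Q', hQ', hB'⟩ := h' r hr (hr'.trans (min_le_right _ _)) v hv
    refine ⟨fun i j => Q i j + Q' i j, ?_, fun D L hL i j => ?_⟩
    · conv_lhs => rw [hQ, hQ']
      simp only [map_add, add_mul, mul_add, Finset.sum_add_distrib]
      ring
    · have h1 := (hB D L hL i j).mono hL (le_max_left d d') (by positivity) le_rfl
      have h2 := (hB' D L hL i j).mono hL (le_max_right d d') (by positivity) le_rfl
      have h3 := h1.add hL h2 (by positivity) (by positivity)
      rw [add_halves] at h3
      convert h3 using 1
      rw [C_add]; ring
  | mul_X p k ih =>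
    obtain ⟨q, d, hq, h⟩ := ih
    refine ⟨fun i j => a k * q i j + if i = k then eval a (pderiv j p) else 0, d + 1,
      fun i j => ?_, fun ε hε => ?_⟩
    · have e : eval a (pderiv i (pderiv j (p * X k))) =
          a k * eval a (pderiv i (pderiv j p)) + (if i = k then eval a (pderiv j p) else 0) +
            if j = k then eval a (pderiv i p) else 0 := by
        simp only [pderiv_mul, pderiv_X, map_add, map_mul, eval_X]
        by_cases hik : i = k <;> by_cases hjk : j = k <;>
          simp [hik, hjk, Pi.single_apply, eq_comm] <;> ring
      rw [e, ← hq]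
      ring
    set M : ℝ := ∑ i, ∑ j, |q i j| + 2 with hM
    have hqM : ∀ i j, |q i j| + 2 ≤ M := by
      intro i j
      have h1 : |q i j| ≤ ∑ j, |q i j| :=
        Finset.single_le_sum (f := fun j => |q i j|) (fun _ _ => abs_nonneg _) (Finset.mem_univ j)
      have h2 : ∑ j, |q i j| ≤ ∑ i, ∑ j, |q i j| :=
        Finset.single_le_sum (f := fun i => ∑ j, |q i j|)
          (fun _ _ => Finset.sum_nonneg fun _ _ => abs_nonneg _) (Finset.mem_univ i)
      linarith
    have hM0 : 0 < M := by
      have : 0 ≤ ∑ i, ∑ j, |q i j| :=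
        Finset.sum_nonneg fun _ _ => Finset.sum_nonneg fun _ _ => abs_nonneg _
      linarith
    set ε1 := min 1 (ε / (4 * (|a k| + 1))) with hε1
    have hε1p : 0 < ε1 := lt_min one_pos (by positivity)
    have hε1a : (|a k| + 1) * ε1 ≤ ε / 4 := by
      have : ε1 ≤ ε / (4 * (|a k| + 1)) := min_le_right _ _
      calc (|a k| + 1) * ε1 ≤ (|a k| + 1) * (ε / (4 * (|a k| + 1))) := by gcongr
        _ = ε / 4 := by field_simp
    obtain ⟨r0, hr0, h⟩ := h ε1 hε1p
    obtain ⟨ρ, hρ, hc⟩ := eval_close a (fun j => pderiv j p) (show 0 < ε / 4 by positivity)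
    refine ⟨min r0 (min ρ (ε / (4 * M))), by positivity, fun r hr hr' v hv => ?_⟩
    have hr1 : r ≤ r0 := hr'.trans (min_le_left _ _)
    have hr2 : r ≤ ρ := hr'.trans ((min_le_right _ _).trans (min_le_left _ _))
    have hr3 : r ≤ ε / (4 * M) := hr'.trans ((min_le_right _ _).trans (min_le_right _ _))
    have hcv := hc v fun i => (hv i).trans hr2
    obtain ⟨Q, hQ, hB⟩ := h r hr hr1 v hv
    refine ⟨fun i j => X k * Q i j + if i = k then C (eval v (pderiv j p)) else 0, ?_,
      fun D L hL i j => ?_⟩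
    · set S := ∑ i, C (eval v (pderiv i p)) * (X i - C (v i)) with hS
      set R := ∑ i, ∑ j, (X i - C (v i)) * (X j - C (v j)) * Q i j with hR
      have e1 : ∑ i, C (eval v (pderiv i (p * X k))) * (X i - C (v i)) =
          C (v k) * S + C (eval v p) * (X k - C (v k)) := by
        have : ∀ i, C (eval v (pderiv i (p * X k))) * (X i - C (v i)) =
            C (v k) * (C (eval v (pderiv i p)) * (X i - C (v i))) +
              if i = k then C (eval v p) * (X k - C (v k)) else 0 := by
          intro i
          simp only [pderiv_mul, pderiv_X, map_add, map_mul, eval_X]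
          by_cases hik : i = k
          · subst hik; simp; ring
          · simp [hik, Pi.single_apply, Ne.symm hik]; ring
        simp only [this, Finset.sum_add_distrib, ← Finset.mul_sum, Finset.sum_ite_eq',
          Finset.mem_univ, if_true, hS]
      have e2 : ∑ i, ∑ j, (X i - C (v i)) * (X j - C (v j)) *
          (X k * Q i j + if i = k then C (eval v (pderiv j p)) else 0) =
          X k * R + (X k - C (v k)) * S := by
        have : ∀ i j, (X i - C (v i)) * (X j - C (v j)) *
          (X k * Q i j + if i = k then C (eval v (pderiv j p)) else 0) =
          X k * ((X i - C (v i)) * (X j - C (v j)) * Q i j) + if i = k then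
            (X k - C (v k)) * (C (eval v (pderiv j p)) * (X j - C (v j))) else 0 := by
          intro i j
          by_cases hik : i = k
          · subst hik; simp; ring
          · simp [hik]; ring
        have h2 : ∀ i, (∑ j, if i = k then
            (X k - C (v k)) * (C (eval v (pderiv j p)) * (X j - C (v j))) else 0) =
            if i = k then (X k - C (v k)) * S else 0 := by
          intro i
          by_cases hik : i = k
          · simp [hik, hS, Finset.mul_sum]
          · simp [hik]
        simp only [this, Finset.sum_add_distrib, h2, ← Finset.mul_sum, Finset.sum_ite_eq',
          Finset.mem_univ, if_true, hR]
      rw [e1, e2]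
      conv_lhs => rw [hQ]
      simp only [map_mul, eval_X]
      ring
    · have b1 := hB D L hL i j
      have b2 := (OpB.const (L := L) (D := D) d (q i j)).mono hL le_rfl (abs_nonneg _)
        (show |q i j| ≤ |q i j| + 1 by linarith)
      have hqp : 0 < |q i j| + 1 := by positivity
      have b3 := (b1.add hL b2 hε1p hqp).w_mul hL k
      have b4 := (b1.C_mul (a k)).mono hL (Nat.le_succ d) (by positivity)
        (show |a k| * ε1 ≤ (|a k| + 1) * ε1 by gcongr; linarith)
      have b5 : OpB L D (d + 1)
          (C (if i = k then eval v (pderiv j p) - eval a (pderiv j p) else 0)) (ε / 4) := by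
        refine (OpB.const (L := L) (D := D) (d + 1) _).mono hL le_rfl (abs_nonneg _) ?_
        by_cases hik : i = k
        · simpa [hik] using hcv j
        · simp [hik]; positivity
      have b6 := (b3.add hL b4 (by positivity) (by positivity)).add hL b5 (by positivity)
        (by positivity)
      have hfin : r * (ε1 + (|q i j| + 1)) + (|a k| + 1) * ε1 + ε / 4 ≤ ε := by
        have h1 : r * (ε1 + (|q i j| + 1)) ≤ ε / 4 := by
          have : ε1 + (|q i j| + 1) ≤ M := by
            have := hqM i j
            have : ε1 ≤ 1 := min_le_left _ _
            linarith
          calc r * (ε1 + (|q i j| + 1)) ≤ ε / (4 * M) * M := by gcongr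
            _ = ε / 4 := by field_simp
        linarith
      have b7 := b6.mono hL le_rfl (by positivity) hfin
      convert b7 using 1
      by_cases hik : i = k
      · simp [hik]; ring
      · simp [hik]; ring

/-! ### Part 4: the tiny box lemma -/

theorem quad_eq {n : ℕ} (A : Matrix (Fin n) (Fin n) ℝ) (x : Fin n → ℝ) :
    star x ⬝ᵥ (A.mulVec x) = ∑ i, ∑ j, x i * A i j * x j := by
  simp only [dotProduct, Matrix.mulVec, Finset.mul_sum, Pi.star_apply, star_trivial, mul_assoc]

theorem posDef_quad {n : ℕ} {A : Matrix (Fin n) (Fin n) ℝ} (hA : A.PosDef) {x : Fin n → ℝ}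
    (hx : x ≠ 0) : 0 < ∑ i, ∑ j, x i * A i j * x j := by
  rw [← quad_eq]
  exact hA.dotProduct_mulVec_pos hx

theorem pd_lower {n : ℕ} {A : Matrix (Fin n) (Fin n) ℝ} (hA : A.PosDef) :
    ∃ c > 0, ∀ x : Fin n → ℝ, c * ∑ i, x i ^ 2 ≤ ∑ i, ∑ j, x i * A i j * x j := by
  by_cases hne : (sphere (0 : Rn n) 1).Nonempty
  · have hcont : Continuous fun x : Rn n => ∑ i, ∑ j, x i * A i j * x j := by fun_prop
    obtain ⟨y, hy, hmin⟩ := (isCompact_sphere (0 : Rn n) 1).exists_isMinOn hne hcont.continuousOn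
    have hy0 : (fun i => y i) ≠ 0 := by
      intro h
      have : y = 0 := by ext i; exact congrFun h i
      rw [this] at hy
      simp at hy
    refine ⟨_, posDef_quad hA hy0, fun x => ?_⟩
    by_cases hx : x = 0
    · simp [hx]
    set X : Rn n := WithLp.toLp 2 x with hX
    have hX0 : X ≠ 0 := by
      intro h; apply hx; ext i
      have := congrArg (fun z : Rn n => z i) h
      simpa [hX] using this
    have hXn : 0 < ‖X‖ := norm_pos_iff.mpr hX0
    have hs : ∑ i, x i ^ 2 = ‖X‖ ^ 2 := by
      rw [EuclideanSpace.norm_sq_eq]; simp [hX]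
    have h1 : ‖X‖⁻¹ • X ∈ sphere (0 : Rn n) 1 := by
      rw [mem_sphere_zero_iff_norm, norm_smul, norm_inv, norm_norm]
      field_simp
    have h2 := hmin h1
    simp only [mem_ofPred_eq] at h2
    have h3 : ∑ i, ∑ j, (‖X‖⁻¹ • X) i * A i j * (‖X‖⁻¹ • X) j =
        (‖X‖⁻¹) ^ 2 * ∑ i, ∑ j, x i * A i j * x j := by
      simp only [Finset.mul_sum, PiLp.smul_apply, smul_eq_mul, hX]
      refine Finset.sum_congr rfl fun i _ => Finset.sum_congr rfl fun j _ => ?_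
      ring
    rw [h3] at h2
    rw [hs]
    calc _ ≤ ((‖X‖⁻¹) ^ 2 * ∑ i, ∑ j, x i * A i j * x j) * ‖X‖ ^ 2 := by gcongr
      _ = _ := by field_simp
  · refine ⟨1, one_pos, fun x => ?_⟩
    have : x = 0 := by
      by_contra hx
      apply hne
      set X : Rn n := WithLp.toLp 2 x with hX
      have hX0 : X ≠ 0 := by
        intro h; apply hx; ext i
        have := congrArg (fun z : Rn n => z i) h
        simpa [hX] using this
      have hXn : 0 < ‖X‖ := norm_pos_iff.mpr hX0
      refine ⟨‖X‖⁻¹ • X, ?_⟩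
      rw [mem_sphere_zero_iff_norm, norm_smul, norm_inv, norm_norm]
      field_simp
    simp [this]

open scoped MatrixOrder in
theorem psd_factor {n : ℕ} {N : Matrix (Fin n) (Fin n) ℝ} (hN : N.PosSemidef) :
    ∃ M : Matrix (Fin n) (Fin n) ℝ, ∀ i j, N i j = ∑ k, M k i * M k j := by
  obtain ⟨M, hM⟩ := CStarAlgebra.nonneg_iff_eq_star_mul_self.mp hN.nonneg
  refine ⟨M, fun i j => ?_⟩
  rw [hM]
  simp [Matrix.mul_apply, Matrix.star_apply]

theorem psd_moment {n : ℕ} {a : Fin n → ℝ} {r : ℝ} {D : ℕ}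
    {L : MvPolynomial (Fin n) ℝ →ₗ[ℝ] ℝ} (hL : Feas a r D L) {N : Matrix (Fin n) (Fin n) ℝ}
    (hN : N.PosSemidef) (z : Fin n → MvPolynomial (Fin n) ℝ) (hz : ∀ i, (z i).totalDegree ≤ D) :
    0 ≤ ∑ i, ∑ j, N i j * L (z i * z j) := by
  obtain ⟨M, hM⟩ := psd_factor hN
  have e : ∑ i, ∑ j, N i j * L (z i * z j) =
      ∑ k, L ((∑ i, C (M k i) * z i) * ∑ i, C (M k i) * z i) := by
    have : ∀ k, L ((∑ i, C (M k i) * z i) * ∑ i, C (M k i) * z i) =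
        ∑ i, ∑ j, M k i * M k j * L (z i * z j) := by
      intro k
      rw [Finset.sum_mul_sum, map_sum]
      refine Finset.sum_congr rfl fun i _ => ?_
      rw [map_sum]
      refine Finset.sum_congr rfl fun j _ => ?_
      rw [← L_C_mul, C_mul]
      congr 1; ring
    rw [Finset.sum_congr rfl fun k _ => this k]
    rw [Finset.sum_comm]
    conv_rhs => rw [Finset.sum_comm]
    conv_lhs => rw [Finset.sum_comm]
    refine Finset.sum_congr rfl fun i _ => ?_
    rw [Finset.sum_comm]
    refine Finset.sum_congr rfl fun j _ => ?_
    rw [hM, Finset.sum_mul]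
  rw [e]
  refine Finset.sum_nonneg fun k _ => hL.2.1 _ ?_
  refine totalDegree_finsetSum_le fun i _ => ?_
  refine (totalDegree_mul _ _).trans ?_
  rw [totalDegree_C, zero_add]; exact hz i

theorem spec_weight {n : ℕ} (w : MvPolynomial (Fin n) ℝ) (D : ℕ) :
    Spec {L : MvPolynomial (Fin n) ℝ →ₗ[ℝ] ℝ |
      ∀ q : MvPolynomial (Fin n) ℝ, q.totalDegree ≤ D → 0 ≤ L (w * (q * q))} := by
  let ι := (restrictTotalDegree (Fin n) ℝ D).subtype
  let m : MvPolynomial (Fin n) ℝ →ₗ[ℝ] MvPolynomial (Fin n) ℝ →ₗ[ℝ] MvPolynomial (Fin n) ℝ :=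
    (LinearMap.mul ℝ (MvPolynomial (Fin n) ℝ)).compr₂ (LinearMap.mulLeft ℝ w)
  refine ⟨restrictTotalDegree (Fin n) ℝ D, inferInstance, inferInstance, inferInstance, 0,
    { toFun := fun L => (m.compr₂ L).compl₁₂ ι ι
      map_add' := fun x y => by ext; simp
      map_smul' := fun x y => by ext; simp }, ?_⟩
  ext L
  simp only [mem_ofPred_eq]
  constructor
  · rintro h ⟨e, he⟩
    have := h e ((mem_restrictTotalDegree _ _ _).mp he)
    simpa [m, ι] using this
  · intro h q hq
    have := h ⟨q, (mem_restrictTotalDegree _ _ _).mpr hq⟩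
    simpa [m, ι] using this

theorem spec_feas {n : ℕ} (a : Fin n → ℝ) (r : ℝ) (D : ℕ) (g : MvPolynomial (Fin n) ℝ) :
    Spec {L : MvPolynomial (Fin n) ℝ →ₗ[ℝ] ℝ | Feas a r D L ∧ 0 ≤ L g} := by
  have h1 := Spec.halfspace (-1) (LinearMap.applyₗ (R := ℝ) (M₂ := ℝ) (1 : MvPolynomial (Fin n) ℝ))
  have h2 := Spec.halfspace 1 (-LinearMap.applyₗ (R := ℝ) (M₂ := ℝ) (1 : MvPolynomial (Fin n) ℝ))
  have h3 := Spec.halfspace 0 (LinearMap.applyₗ (R := ℝ) (M₂ := ℝ) g)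
  have h4 := spec_weight (1 : MvPolynomial (Fin n) ℝ) D
  have h5 := Spec.forall fun i : Fin n => spec_weight (C (r ^ 2) - (X i - C (a i)) ^ 2) D
  convert (((h1.inter h2).inter h3).inter h4).inter h5 using 1
  ext L
  simp only [mem_ofPred_eq, mem_inter_iff, Feas, LinearMap.applyₗ_apply_apply, LinearMap.neg_apply, one_mul]
  constructor
  · rintro ⟨⟨a1, a2, a3⟩, a4⟩
    exact ⟨⟨⟨⟨by linarith, by linarith⟩, by linarith⟩, a2⟩, a3⟩
  · rintro ⟨⟨⟨⟨a1, a2⟩, a3⟩, a4⟩, a5⟩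
    exact ⟨⟨by linarith, a4, a5⟩, by linarith⟩

theorem tiny_box {n : ℕ} (g : MvPolynomial (Fin n) ℝ) (a : Rn n) (hpd : (-(phess g a)).PosDef) :
    ∃ r0 > 0, ∀ r, 0 < r → r ≤ r0 → SRep {x : Rn n | (∀ i, |x i - a i| ≤ r) ∧ 0 ≤ peval g x} := by
  set b : Fin n → ℝ := fun i => a i with hb
  obtain ⟨q, d, hq, hT⟩ := taylor_op b g
  obtain ⟨c, hc, hlow⟩ := pd_lower hpd
  have hN : (-(phess g a) - c • (1 : Matrix (Fin n) (Fin n) ℝ)).PosSemidef := by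
    rw [real_posSemidef_iff]
    constructor
    · have h1 : (-(phess g a)).IsSymm := ((real_posSemidef_iff _).mp hpd.posSemidef).1
      exact h1.sub ((Matrix.isSymm_one).smul c)
    · intro x
      have h1 := hlow x
      have h2 : ∑ i, ∑ j, x i * (-(phess g a) - c • (1 : Matrix (Fin n) (Fin n) ℝ)) i j * x j =
          ∑ i, ∑ j, x i * (-(phess g a)) i j * x j - c * ∑ i, x i ^ 2 := by
        rw [Finset.mul_sum, ← Finset.sum_sub_distrib]
        refine Finset.sum_congr rfl fun i _ => ?_
        simp only [Matrix.sub_apply, Matrix.smul_apply, Matrix.one_apply, smul_eq_mul, mul_sub,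
          sub_mul, Finset.sum_sub_distrib]
        congr 1
        rw [Finset.sum_eq_single i]
        · simp; ring
        · intro j _ hj; simp [Ne.symm hj]
        · simp
      rw [h2]; linarith
  set ε : ℝ := c / (2 * (n + 1)) with hε
  have hεp : 0 < ε := by positivity
  have hεn : ε * n ≤ c / 2 := by
    rw [hε, div_mul_eq_mul_div, div_le_div_iff₀ (by positivity) (by positivity)]
    nlinarith
  obtain ⟨r0, hr0, h⟩ := hT ε hεp
  refine ⟨r0, hr0, fun r hr hr' => ?_⟩
  refine ⟨_, inferInstance, inferInstance, _,
    { toFun := fun L : MvPolynomial (Fin n) ℝ →ₗ[ℝ] ℝ => WithLp.toLp 2 fun i => L (X i)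
      map_add' := fun x y => by ext; simp
      map_smul' := fun x y => by ext; simp }, 0, spec_feas b r (d + 1) g, ?_⟩
  ext x
  simp only [mem_ofPred_eq, mem_image, LinearMap.coe_mk, AddHom.coe_mk, zero_add]
  constructor
  · rintro ⟨hx, hgx⟩
    refine ⟨(MvPolynomial.aeval (R := ℝ) (fun i => x i)).toLinearMap, ⟨⟨?_, ?_, ?_⟩, ?_⟩, ?_⟩
    · simp
    · intro q _
      simpa using mul_self_nonneg _
    · intro i q _
      have h1 : 0 ≤ r ^ 2 - (x i - a i) ^ 2 := by
        have := hx i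
        have := sq_le_sq' (abs_le.mp this).1 (abs_le.mp this).2
        linarith
      have := mul_nonneg h1 (mul_self_nonneg (aeval (R := ℝ) (fun i => x i) q))
      simpa [hb] using this
    · simpa [peval, MvPolynomial.aeval_eq_eval] using hgx
    · ext i; simp
  · rintro ⟨L, ⟨hF, hLg⟩, rfl⟩
    set v : Fin n → ℝ := fun i => L (X i) with hv
    have hzd : ∀ i, (X i - C (v i) : MvPolynomial (Fin n) ℝ).totalDegree ≤ 1 := by
      intro i
      refine (totalDegree_sub _ _).trans (max_le ?_ ?_)
      · rw [totalDegree_X]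
      · rw [totalDegree_C]; omega
    have hLC : ∀ k : ℝ, L (C k) = k := by
      intro k
      have := L_C_mul L k 1
      rw [mul_one, hF.1, mul_one] at this; exact this
    have hz0 : ∀ i, L (X i - C (v i)) = 0 := by
      intro i; rw [map_sub, hLC]; simp [hv]
    have hvr : ∀ i, |v i - b i| ≤ r := by
      intro i
      have h1 := hF.2.2 i 1 (by simp)
      have h2 := hF.2.1 (X i - C (v i)) ((hzd i).trans (by omega))
      have e1 : (C (r ^ 2) - (X i - C (b i)) ^ 2) * (1 * 1 : MvPolynomial (Fin n) ℝ) =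
          C (r ^ 2 - (v i - b i) ^ 2) - (X i - C (v i)) * (X i - C (v i))
            - C (2 * (v i - b i)) * (X i - C (v i)) := by
        simp only [C_sub, C_pow, C_mul]
        rw [show (C (2 : ℝ) : MvPolynomial (Fin n) ℝ) = 2 from rfl]
        ring
      rw [e1, map_sub, map_sub, hLC, L_C_mul, hz0] at h1
      exact abs_le_of_sq_le_sq (by linarith) hr.le
    refine ⟨hvr, ?_⟩
    obtain ⟨Q, hQ, hB⟩ := h r hr hr' v hvr
    have hB := hB _ L hF
    set z : Fin n → MvPolynomial (Fin n) ℝ := fun i => X i - C (v i) with hz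
    set W : Fin n → ℝ := fun i => L (z i * z i) with hW
    have hW0 : ∀ i, 0 ≤ W i := fun i => hF.2.1 _ ((hzd i).trans (by omega))
    have e1 : L g = eval v g + ∑ i, ∑ j, L (z i * z j * Q i j) := by
      conv_lhs => rw [hQ]
      rw [map_add, map_add, hLC, map_sum, map_sum]
      simp only [L_C_mul, map_sum]
      have : ∀ i, L (X i - C (v i)) = 0 := hz0
      simp only [this, mul_zero, Finset.sum_const_zero, add_zero]
      rfl
    have e2 : ∀ i j, L (z i * z j * Q i j) ≤ q i j * L (z i * z j) + ε / 2 * (W i + W j) := by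
      intro i j
      have h1 := (hB i j).abs_le hF hεp (s := z i) (t := z j)
        (by have := hzd i; simp only [hz]; omega) ((hzd j).trans (by omega))
      have h2 := (abs_le.mp h1).2
      have e : z i * z j * Q i j = z i * z j * (Q i j - C (q i j)) + C (q i j) * (z i * z j) := by
        ring
      rw [e, map_add, L_C_mul]
      linarith
    have e3 : ∑ i, ∑ j, L (z i * z j * Q i j) ≤
        ∑ i, ∑ j, q i j * L (z i * z j) + ε * n * ∑ i, W i := by
      calc _ ≤ ∑ i, ∑ j, (q i j * L (z i * z j) + ε / 2 * (W i + W j)) :=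
            Finset.sum_le_sum fun i _ => Finset.sum_le_sum fun j _ => e2 i j
        _ = _ := by
            simp only [Finset.sum_add_distrib, ← Finset.mul_sum, Finset.sum_const,
              Finset.card_univ, Fintype.card_fin, nsmul_eq_mul]
            ring
    have e4 : 2 * ∑ i, ∑ j, q i j * L (z i * z j) = ∑ i, ∑ j, phess g a i j * L (z i * z j) := by
      have h1 : ∑ i, ∑ j, q i j * L (z i * z j) = ∑ i, ∑ j, q j i * L (z i * z j) := by
        rw [Finset.sum_comm]
        refine Finset.sum_congr rfl fun i _ => Finset.sum_congr rfl fun j _ => ?_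
        rw [mul_comm (z j)]
      rw [two_mul]
      nth_rewrite 2 [h1]
      simp only [← Finset.sum_add_distrib, ← add_mul, hq]
      rfl
    have e5 := psd_moment hF hN z fun i => (hzd i).trans (by omega)
    have e6 : ∑ i, ∑ j, (-(phess g a) - c • (1 : Matrix (Fin n) (Fin n) ℝ)) i j * L (z i * z j) =
        -(∑ i, ∑ j, phess g a i j * L (z i * z j)) - c * ∑ i, W i := by
      rw [Finset.mul_sum, ← Finset.sum_neg_distrib, ← Finset.sum_sub_distrib]
      refine Finset.sum_congr rfl fun i _ => ?_
      simp only [Matrix.sub_apply, Matrix.smul_apply, Matrix.one_apply, smul_eq_mul,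
          sub_mul, Finset.sum_sub_distrib, Matrix.neg_apply, neg_mul, Finset.sum_neg_distrib]
      congr 1
      rw [Finset.sum_eq_single i]
      · simp [hW]
      · intro j _ hj; simp [Ne.symm hj]
      · simp
    have hWs : 0 ≤ ∑ i, W i := Finset.sum_nonneg fun i _ => hW0 i
    have h7 := mul_le_mul_of_nonneg_right hεn hWs
    have : peval g (WithLp.toLp 2 fun i => L (X i)) = eval v g := rfl
    rw [this]
    linarith

/-! ### Part 5: concavity of polynomials with negative definite Hessian -/

theorem hasDerivAt_line {n : ℕ} (g : MvPolynomial (Fin n) ℝ) (x d : Rn n) (t : ℝ) :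
    HasDerivAt (fun t : ℝ => peval g (x + t • d))
      (∑ i, d i * peval (pderiv i g) (x + t • d)) t := by
  induction g using MvPolynomial.induction_on with
  | C k => simpa [peval] using hasDerivAt_const t k
  | add p q hp hq =>
    have := hp.add hq
    refine (this.congr_deriv ?_).congr_of_eventuallyEq (Filter.Eventually.of_forall fun s => ?_)
    rotate_left
    · simp [peval]
    · simp only [peval, map_add, mul_add, Finset.sum_add_distrib]
  | mul_X p k hp =>
    have h1 : HasDerivAt (fun t : ℝ => x k + t * d k) (d k) t := by
      simpa using ((hasDerivAt_id t).mul_const (d k)).const_add (x k)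
    have := hp.mul h1
    refine (this.congr_deriv ?_).congr_of_eventuallyEq (Filter.Eventually.of_forall fun s => ?_)
    rotate_left
    · simp [peval]
    · have h2 : ∀ i, d i * peval (pderiv i (p * X k)) (x + t • d) =
          d i * peval (pderiv i p) (x + t • d) * (x k + t * d k) +
            if i = k then peval p (x + t • d) * d k else 0 := by
        intro i
        simp only [peval, pderiv_mul, pderiv_X, map_add, map_mul, eval_X]
        by_cases hik : i = k
        · subst hik; simp; ring
        · simp [hik, Ne.symm hik]; ring
      simp only [h2, Finset.sum_add_distrib, ← Finset.sum_mul, Finset.sum_ite_eq',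
          Finset.mem_univ, if_true]

theorem grad_ineq {n : ℕ} {g : MvPolynomial (Fin n) ℝ} {s : Set (Rn n)} (hs : Convex ℝ s)
    (hpd : ∀ x ∈ s, (-(phess g x)).PosDef) {v w : Rn n} (hv : v ∈ s) (hw : w ∈ s) (hvw : v ≠ w) :
    peval g w < peval g v + ∑ i, pgrad g v i * (w i - v i) := by
  set d : Rn n := w - v with hd
  have hd0 : (fun i => d i) ≠ 0 := by
    intro h
    apply hvw
    ext i
    have := congrFun h i
    simp [hd] at this
    linarith
  have hmem : ∀ t : ℝ, 0 ≤ t → t ≤ 1 → v + t • d ∈ s := fun t h0 h1 =>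
    hs.add_smul_sub_mem hv hw ⟨h0, h1⟩
  have h1 := fun t => hasDerivAt_line g v d t
  have h2 : ∀ t : ℝ, HasDerivAt (fun t : ℝ => ∑ i, d i * peval (pderiv i g) (v + t • d))
      (∑ i, ∑ j, d i * phess g (v + t • d) j i * d j) t := by
    intro t
    have := HasDerivAt.fun_sum (u := (Finset.univ : Finset (Fin n)))
      (A := fun i t => d i * peval (pderiv i g) (v + t • d)) fun i _ =>
      (hasDerivAt_line (pderiv i g) v d t).const_mul (d i)
    refine this.congr_deriv ?_
    symm
    refine Finset.sum_congr rfl fun i _ => ?_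
    rw [Finset.mul_sum]
    refine Finset.sum_congr rfl fun j _ => ?_
    simp only [phess, peval, Matrix.of_apply]
    ring
  obtain ⟨c, hc, hc'⟩ := exists_hasDerivAt_eq_slope _ _ (zero_lt_one' ℝ)
    (fun t _ => (h1 t).continuousAt.continuousWithinAt) (fun t _ => h1 t)
  obtain ⟨e, he, he'⟩ := exists_hasDerivAt_eq_slope _ _ hc.1
    (fun t _ => (h2 t).continuousAt.continuousWithinAt) (fun t _ => h2 t)
  have h3 := posDef_quad (hpd _ (hmem e he.1.le (he.2.trans hc.2).le)) hd0
  have h4 : ∑ i, ∑ j, d i * phess g (v + e • d) j i * d j < 0 := by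
    rw [Finset.sum_comm]
    have : ∑ i, ∑ j, d i * (-(phess g (v + e • d))) i j * d j =
        -∑ i, ∑ j, d j * phess g (v + e • d) i j * d i := by
      simp only [← Finset.sum_neg_distrib, Matrix.neg_apply]
      refine Finset.sum_congr rfl fun i _ => Finset.sum_congr rfl fun j _ => ?_
      ring
    linarith
  rw [he', div_lt_iff₀ (by linarith [hc.1])] at h4
  simp only [one_smul, zero_smul, add_zero, sub_zero, div_one] at hc' h4
  have e1 : v + d = w := by simp [hd]
  rw [e1] at hc'
  have e2 : ∑ i, pgrad g v i * (w i - v i) = ∑ i, d i * peval (pderiv i g) v := by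
    refine Finset.sum_congr rfl fun i _ => ?_
    simp only [pgrad, peval, hd, PiLp.sub_apply]; ring
  rw [e2]
  linarith

theorem strictConcave_peval {n : ℕ} {g : MvPolynomial (Fin n) ℝ} {s : Set (Rn n)}
    (hs : Convex ℝ s) (hpd : ∀ x ∈ s, (-(phess g x)).PosDef) :
    StrictConcaveOn ℝ s (peval g) := by
  refine ⟨hs, fun x hx y hy hxy a b ha hb hab => ?_⟩
  have hm := hs hx hy ha.le hb.le hab
  set m := a • x + b • y with hmdef
  have hmx : m ≠ x := by
    intro h
    apply hxy
    have : b • (y - x) = 0 := by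
      have : a • x + b • y = (a + b) • x := by rw [hab, one_smul]; exact h
      rw [add_smul] at this
      rw [smul_sub, sub_eq_zero]; exact add_left_cancel this
    rcases smul_eq_zero.mp this with h | h
    · exact absurd h hb.ne'
    · exact (sub_eq_zero.mp h).symm
  have hmy : m ≠ y := by
    intro h
    apply hxy
    have : a • (x - y) = 0 := by
      have : a • x + b • y = (a + b) • y := by rw [hab, one_smul]; exact h
      rw [add_smul] at this
      rw [smul_sub, sub_eq_zero]; exact add_right_cancel this
    rcases smul_eq_zero.mp this with h | h
    · exact absurd h ha.ne'
    · exact sub_eq_zero.mp h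
  have h1 := mul_lt_mul_of_pos_left (grad_ineq hs hpd hm hx hmx) ha
  have h2 := mul_lt_mul_of_pos_left (grad_ineq hs hpd hm hy hmy) hb
  have h3 : a * ∑ i, pgrad g m i * (x i - m i) + b * ∑ i, pgrad g m i * (y i - m i) = 0 := by
    rw [Finset.mul_sum, Finset.mul_sum, ← Finset.sum_add_distrib]
    refine Finset.sum_eq_zero fun i _ => ?_
    have : m i = a * x i + b * y i := by simp [hmdef]
    have h5 : a * (x i - m i) + b * (y i - m i) = (1 - (a + b)) * m i := by rw [this]; ring
    have h6 : a * (x i - m i) + b * (y i - m i) = 0 := by rw [h5, hab]; ring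
    calc _ = pgrad g m i * (a * (x i - m i) + b * (y i - m i)) := by ring
      _ = 0 := by rw [h6, mul_zero]
  have h4 : a * peval g m + b * peval g m = peval g m := by rw [← add_mul, hab, one_mul]
  simp only [smul_eq_mul]
  nlinarith

theorem continuous_peval {n : ℕ} (g : MvPolynomial (Fin n) ℝ) : Continuous (peval g) := by
  have h : Continuous fun x : Rn n => (fun i => x i) := by fun_prop
  exact (MvPolynomial.continuous_eval g).comp h

theorem sum_eq_inner {n : ℕ} (l x : Rn n) : ∑ i, l i * x i = inner ℝ l x := by
  rw [PiLp.inner_apply]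
  refine Finset.sum_congr rfl fun i _ => ?_
  simp [mul_comm]

/-! ### Part 6: spectrahedral shadows from local strict concavity -/

theorem srep_of_family {n : ℕ} {ι : Type} [Finite ι] [Nonempty ι]
    (G : ι → MvPolynomial (Fin n) ℝ) {K : Set (Rn n)} (hK : K = {x | ∀ i, 0 ≤ peval (G i) x})
    (hcpt : IsCompact K) (hconv : Convex ℝ K) (hpd : ∀ i, ∀ x ∈ K, (-(phess (G i) x)).PosDef) :
    SRep K := by
  classical
  have := Fintype.ofFinite ι
  have hr : ∀ a ∈ K, ∃ r > 0, ∀ i,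
      SRep {x : Rn n | (∀ j, |x j - a j| ≤ r) ∧ 0 ≤ peval (G i) x} := by
    intro a ha
    have h : ∀ᶠ r in nhdsWithin (0 : ℝ) (Ioi 0), ∀ i,
        SRep {x : Rn n | (∀ j, |x j - a j| ≤ r) ∧ 0 ≤ peval (G i) x} := by
      rw [Filter.eventually_all]
      intro i
      obtain ⟨r0, hr0, h⟩ := tiny_box (G i) a (hpd i a ha)
      filter_upwards [Ioc_mem_nhdsGT hr0] with r hr
      exact h r hr.1 hr.2
    obtain ⟨r, h1, h2⟩ := (h.and self_mem_nhdsWithin).exists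
    exact ⟨r, h2, h1⟩
  choose! r hr0 hr using hr
  set U : Rn n → Set (Rn n) := fun a => {x | ∀ j, |x j - a j| ≤ r a} with hU
  have hUn : ∀ a ∈ K, U a ∈ nhds a := by
    intro a ha
    refine mem_of_superset (closedBall_mem_nhds a (hr0 a ha)) fun x hx j => ?_
    rw [mem_closedBall, dist_eq_norm] at hx
    have := PiLp.norm_apply_le (x - a) j
    rw [Real.norm_eq_abs, PiLp.sub_apply] at this
    exact this.trans hx
  obtain ⟨t, htK, ht⟩ := hcpt.elim_nhds_subcover U hUn
  have hpiece : ∀ a ∈ t, SRep (U a ∩ K) := by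
    intro a ha
    have := SRep.forall Finset.univ fun i _ => hr a (htK a ha) i
    convert this using 1
    ext x
    simp only [hK, hU, mem_inter_iff, mem_ofPred_eq, Finset.mem_univ, true_imp_iff]
    constructor
    · rintro ⟨h1, h2⟩ i
      exact ⟨h1, h2 i⟩
    · intro h
      exact ⟨(h (Classical.arbitrary ι)).1, fun i => (h i).2⟩
  have hfin := (SRep.convexHull_biUnion t hpiece
    fun a _ => hcpt.isBounded.subset inter_subset_right).1
  have hun : ⋃ a ∈ t, U a ∩ K = K := by
    apply Subset.antisymm
    · exact iUnion₂_subset fun a _ => inter_subset_right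
    · intro x hx
      have := ht hx
      simp only [mem_iUnion, exists_prop] at this ⊢
      obtain ⟨a, ha, hxa⟩ := this
      exact ⟨a, ha, hxa, hx⟩
  rw [hun, hconv.convexHull_eq] at hfin
  exact hfin

theorem unit_functional {n : ℕ} (f : Rn n →L[ℝ] ℝ) (hf : f ≠ 0) :
    ∃ l : Rn n, ‖l‖ = 1 ∧ ∃ c > 0, ∀ x, ∑ i, l i * x i = c * f x := by
  set w := (InnerProductSpace.toDual ℝ (Rn n)).symm f with hw
  have hw0 : w ≠ 0 := by simpa [hw] using hf
  have hwn : 0 < ‖w‖ := norm_pos_iff.mpr hw0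
  refine ⟨‖w‖⁻¹ • w, ?_, ‖w‖⁻¹, by positivity, fun x => ?_⟩
  · rw [norm_smul, norm_inv, norm_norm]; field_simp
  · rw [sum_eq_inner, inner_smul_left, hw, InnerProductSpace.toDual_symm_apply]
    simp

/-- A minimizer over the hull of a set with unique minimizers lies in the set. -/
theorem min_mem {n : ℕ} {P : Set (Rn n)} (hP : IsCompact P) (hne : P.Nonempty) (l : Rn n)
    (huniq : ∀ v ∈ P, ∀ w ∈ P, (∀ x ∈ P, ∑ i, l i * v i ≤ ∑ i, l i * x i) →
      (∀ x ∈ P, ∑ i, l i * w i ≤ ∑ i, l i * x i) → v = w)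
    {v : Rn n} (hv : v ∈ convexHull ℝ P)
    (hmin : ∀ x ∈ P, ∑ i, l i * v i ≤ ∑ i, l i * x i) : v ∈ P := by
  have hc : Continuous fun x : Rn n => ∑ i, l i * x i := by fun_prop
  obtain ⟨p, hp, hpm⟩ := hP.exists_isMinOn hne hc.continuousOn
  have hpm : ∀ x ∈ P, ∑ i, l i * p i ≤ ∑ i, l i * x i := fun x hx => hpm hx
  set Z : Set (Rn n) := {x | x = p ∨ ∑ i, l i * p i < ∑ i, l i * x i} with hZ
  have hPZ : P ⊆ Z := by
    intro x hx
    by_cases h : ∑ i, l i * p i < ∑ i, l i * x i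
    · exact Or.inr h
    · left
      exact huniq x hx p hp (fun y hy => (not_lt.mp h).trans (hpm y hy)) hpm
  have hZc : Convex ℝ Z := by
    rw [convex_iff_forall_pos]
    intro x hx y hy a b ha hb hab
    have e : ∑ i, l i * (a • x + b • y) i = a * ∑ i, l i * x i + b * ∑ i, l i * y i := by
      rw [sum_eq_inner, sum_eq_inner, sum_eq_inner, inner_add_right, inner_smul_right,
        inner_smul_right]
    have e2 : a * ∑ i, l i * p i + b * ∑ i, l i * p i = ∑ i, l i * p i := by
      rw [← add_mul, hab, one_mul]
    rcases hx with rfl | hx <;> rcases hy with rfl | hy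
    · left; rw [← add_smul, hab, one_smul]
    · right; rw [e]; have := mul_lt_mul_of_pos_left hy hb; linarith
    · right; rw [e]; have := mul_lt_mul_of_pos_left hx ha; linarith
    · right; rw [e]
      have := mul_lt_mul_of_pos_left hy hb
      have := mul_lt_mul_of_pos_left hx ha
      linarith
  rcases convexHull_min hPZ hZc hv with h | h
  · rw [h]; exact hp
  · exact absurd (hmin p hp) (not_le.mpr h)

theorem isCompact_hull {n : ℕ} {P : Set (Rn n)} (hP : IsCompact P) :
    IsCompact (convexHull ℝ P) := by
  have heq : convexHull ℝ P = ⋃ k : Fin (n + 2),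
      (fun q : (Fin k → ℝ) × (Fin k → Rn n) => ∑ i, q.1 i • q.2 i) ''
        (stdSimplex ℝ (Fin k) ×ˢ Set.univ.pi fun _ => P) := by
    apply Subset.antisymm
    · intro x hx
      obtain ⟨ι, _, z, w, hz, hind, hw, hw1, hx⟩ := eq_pos_convex_span_of_mem_convexHull hx
      have hcard := hind.card_le_finrank_succ
      have h2 : Module.finrank ℝ (vectorSpan ℝ (range z)) ≤ n := by
        refine (Submodule.finrank_le _).trans ?_
        simp
      let e := (Fintype.equivFin ι).symm
      refine mem_iUnion.mpr ⟨⟨Fintype.card ι, by omega⟩, ?_⟩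
      refine ⟨(fun i => w (e i), fun i => z (e i)), ⟨⟨fun i => (hw _).le, ?_⟩, ?_⟩, ?_⟩
      · rw [← hw1]; exact Equiv.sum_comp e w
      · intro i _; exact hz ⟨_, rfl⟩
      · rw [← hx]; exact Equiv.sum_comp e fun i => w i • z i
    · refine iUnion_subset fun k => ?_
      rintro _ ⟨q, ⟨hq1, hq2⟩, rfl⟩
      exact (convex_convexHull ℝ P).sum_mem (fun i _ => hq1.1 i) hq1.2
        fun i _ => subset_convexHull ℝ P (hq2 i (mem_univ i))
  rw [heq]
  refine isCompact_iUnion fun k => ?_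
  refine ((isCompact_stdSimplex ℝ (Fin k)).prod (isCompact_univ_pi fun _ => hP)).image ?_
  fun_prop

theorem hull_srep {n : ℕ} {ι : Type} [Finite ι] [Nonempty ι]
    (G : ι → MvPolynomial (Fin n) ℝ) {P B : Set (Rn n)} (hB : Convex ℝ B)
    (hP : IsCompact P) (hPB : P ⊆ B)
    (hball : ∀ x, (∀ i, 0 ≤ peval (G i) x) → x ∈ B)
    (hpd : ∀ i, ∀ x ∈ B, (-(phess (G i) x)).PosDef)
    (hGP : ∀ i, ∀ x ∈ P, 0 ≤ peval (G i) x)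
    (huniq : ∀ l : Rn n, ‖l‖ = 1 → ∀ v ∈ P, ∀ w ∈ P,
      (∀ x ∈ P, ∑ i, l i * v i ≤ ∑ i, l i * x i) →
      (∀ x ∈ P, ∑ i, l i * w i ≤ ∑ i, l i * x i) → v = w)
    (hact : ∀ l : Rn n, ‖l‖ = 1 → ∀ v ∈ P, (∀ x ∈ P, ∑ i, l i * v i ≤ ∑ i, l i * x i) →
      ∃ i, peval (G i) v = 0) :
    SRep (convexHull ℝ P) := by
  rcases P.eq_empty_or_nonempty with rfl | hne
  · rw [convexHull_empty]; exact SRep.empty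
  by_cases hsub : P.Subsingleton
  · obtain ⟨p, hp⟩ := hne
    rw [hsub.eq_singleton_of_mem hp, convexHull_singleton]
    exact SRep.singleton p
  have hconc := fun i => strictConcave_peval hB (hpd i)
  have hinter : (interior (convexHull ℝ P)).Nonempty := by
    rw [interior_convexHull_nonempty_iff_affineSpan_eq_top]
    by_contra hspan
    have hdir : (affineSpan ℝ P).direction ≠ ⊤ := by
      intro h
      exact hspan ((AffineSubspace.direction_eq_top_iff_of_nonempty
        ((affineSpan_nonempty ℝ).mpr hne)).mp h)
    have horth : (affineSpan ℝ P).directionᗮ ≠ ⊥ := by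
      intro h
      exact hdir (Submodule.orthogonal_eq_bot_iff.mp h)
    obtain ⟨w, hw, hw0⟩ := Submodule.exists_mem_ne_zero_of_ne_bot horth
    have hwn : 0 < ‖w‖ := norm_pos_iff.mpr hw0
    have hconst : ∀ x ∈ P, ∀ y ∈ P, ∑ i, (‖w‖⁻¹ • w) i * x i ≤ ∑ i, (‖w‖⁻¹ • w) i * y i := by
      intro x hx y hy
      have h1 : x -ᵥ y ∈ (affineSpan ℝ P).direction :=
        AffineSubspace.vsub_mem_direction (subset_affineSpan ℝ P hx) (subset_affineSpan ℝ P hy)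
      have h2 := Submodule.inner_left_of_mem_orthogonal h1 hw
      rw [vsub_eq_sub, inner_sub_right] at h2
      rw [sum_eq_inner, sum_eq_inner, inner_smul_left, inner_smul_left]
      rw [sub_eq_zero.mp h2]
    apply hsub
    intro x hx y hy
    refine huniq (‖w‖⁻¹ • w) ?_ x hx y hy (hconst x hx) (hconst y hy)
    rw [norm_smul, norm_inv, norm_norm]; field_simp
  have hCB : convexHull ℝ P ⊆ B := convexHull_min hPB hB
  have hCG : ∀ x ∈ convexHull ℝ P, ∀ i, 0 ≤ peval (G i) x := by
    intro x hx i
    have h1 : Convex ℝ {x ∈ B | 0 ≤ peval (G i) x} := (hconc i).concaveOn.convex_ge 0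
    have h2 : P ⊆ {x ∈ B | 0 ≤ peval (G i) x} := fun y hy => ⟨hPB hy, hGP i y hy⟩
    exact (convexHull_min h2 h1 hx).2
  have hCc : IsCompact (convexHull ℝ P) := isCompact_hull hP
  have hCcl := hCc.isClosed
  have hCconv := convex_convexHull ℝ P
  have heq : convexHull ℝ P = {x | ∀ i, 0 ≤ peval (G i) x} := by
    apply Subset.antisymm
    · exact hCG
    intro y hy
    by_contra hyC
    obtain ⟨x0, hx0⟩ := hinter
    have hx0C := interior_subset hx0
    have hpre : IsPreconnected (segment ℝ x0 y) := (convex_segment x0 y).isPreconnected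
    have hex : ∃ v ∈ segment ℝ x0 y, v ∈ convexHull ℝ P ∧ v ∉ interior (convexHull ℝ P) := by
      by_contra! hcon
      have hcov : segment ℝ x0 y ⊆ interior (convexHull ℝ P) ∪ (convexHull ℝ P)ᶜ := by
        intro z hz
        by_cases hzC : z ∈ convexHull ℝ P
        · exact Or.inl (hcon z hz hzC)
        · exact Or.inr hzC
      obtain ⟨z, _, hz1, hz2⟩ := hpre _ _ isOpen_interior hCcl.isOpen_compl hcov
        ⟨x0, left_mem_segment ℝ x0 y, hx0⟩ ⟨y, right_mem_segment ℝ x0 y, hyC⟩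
      exact hz2 (interior_subset hz1)
    obtain ⟨v, hvseg, hvC, hvi⟩ := hex
    have hvy : v ≠ y := fun h => hyC (h ▸ hvC)
    have hvx : v ≠ x0 := fun h => hvi (h ▸ hx0)
    have hxy : x0 ≠ y := fun h => hyC (h ▸ hx0C)
    obtain ⟨φ, hφ⟩ := geometric_hahn_banach_open_point hCconv.interior isOpen_interior hvi
    have hφ0 : -φ ≠ 0 := by
      intro h
      have := hφ x0 hx0
      rw [neg_eq_zero.mp h] at this
      simp at this
    obtain ⟨l, hl, c, hc, hlx⟩ := unit_functional (-φ) hφ0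
    have hle : ∀ x ∈ convexHull ℝ P, φ x ≤ φ v := by
      intro x hx
      have h1 : x ∈ closure (interior (convexHull ℝ P)) := by
        rw [hCconv.closure_interior_eq_closure_of_nonempty_interior ⟨x0, hx0⟩]
        exact subset_closure hx
      have h2 : IsClosed {x | φ x ≤ φ v} := isClosed_le φ.continuous continuous_const
      exact closure_minimal (fun z hz => (hφ z hz).le) h2 h1
    have hminv : ∀ x ∈ P, ∑ i, l i * v i ≤ ∑ i, l i * x i := by
      intro x hx
      rw [hlx, hlx]
      have := hle x (subset_convexHull ℝ P hx)
      refine mul_le_mul_of_nonneg_left ?_ hc.le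
      simpa using this
    have hvP := min_mem hP hne l (huniq l hl) hvC hminv
    obtain ⟨i, hi⟩ := hact l hl v hvP hminv
    have hvo : v ∈ openSegment ℝ x0 y := by
      rw [← insert_endpoints_openSegment] at hvseg
      rcases hvseg with h | h | h
      · exact absurd h hvx
      · exact absurd h hvy
      · exact h
    obtain ⟨a, b, ha, hb, hab, hvab⟩ := hvo
    have h1 := (hconc i).2 (hCB hx0C) (hball y hy) hxy ha hb hab
    rw [hvab, hi] at h1
    have h2 := mul_nonneg ha.le (hCG x0 hx0C i)
    have h3 := mul_nonneg hb.le (hy i)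
    simp only [smul_eq_mul] at h1
    linarith
  exact srep_of_family G heq hCc hCconv fun i x hx => hpd i x (hCB hx)

/-! ### Part 7: the local pieces given by the PDLH condition -/

theorem peval_ballPoly {n : ℕ} (u : Rn n) (δ : ℝ) (x : Rn n) :
    peval (ballPoly u δ) x = δ ^ 2 - ‖x - u‖ ^ 2 := by
  rw [EuclideanSpace.norm_sq_eq]
  simp [peval, ballPoly, map_sum]

theorem mem_closedBall_iff_ballPoly {n : ℕ} (u : Rn n) {δ : ℝ} (hδ : 0 < δ) (x : Rn n) :
    x ∈ closedBall u δ ↔ 0 ≤ peval (ballPoly u δ) x := by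
  rw [peval_ballPoly, mem_closedBall, dist_eq_norm, sub_nonneg]
  exact (sq_le_sq₀ (norm_nonneg _) hδ.le).symm

theorem phess_ballPoly {n : ℕ} (u : Rn n) (δ : ℝ) (x : Rn n) :
    (-(phess (ballPoly u δ) x)).PosDef := by
  have h : -(phess (ballPoly u δ) x) = (2 : ℝ) • (1 : Matrix (Fin n) (Fin n) ℝ) := by
    ext i j
    have h1 : pderiv j (ballPoly u δ) = -(C 2 * (X j - C (u j))) := by
      simp only [ballPoly, map_sub, pderiv_C, map_sum, zero_sub, pderiv_pow, pderiv_X]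
      rw [Finset.sum_eq_single j]
      · simp; exact Or.inl rfl
      · intro k _ hk; simp [hk]
      · simp
    simp only [phess, Matrix.neg_apply, Matrix.of_apply, h1, Matrix.smul_apply, Matrix.one_apply]
    simp only [map_neg, pderiv_C_mul, map_sub, pderiv_X, pderiv_C]
    by_cases hij : i = j
    · subst hij; simp
    · simp [hij, Ne.symm hij]
  rw [h]
  exact Matrix.PosDef.one.smul (by norm_num)

/-- The Lagrangian combination of the constraints. -/
def lagr {n m1 m : ℕ} (f : Fin m1 → MvPolynomial (Fin n) ℝ) (h : Fin m → MvPolynomial (Fin n) ℝ)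
    (p : (Fin m1 → ℝ) × (Fin m → ℝ)) : MvPolynomial (Fin n) ℝ :=
  ∑ k, C (p.1 k) * f k + ∑ j, C (p.2 j) * h j

section Lagr
variable {n m1 m : ℕ} (f : Fin m1 → MvPolynomial (Fin n) ℝ) (h : Fin m → MvPolynomial (Fin n) ℝ)
    (p : (Fin m1 → ℝ) × (Fin m → ℝ)) (x : Rn n)

theorem peval_lagr : peval (lagr f h p) x =
    ∑ k, p.1 k * peval (f k) x + ∑ j, p.2 j * peval (h j) x := by
  simp [peval, lagr, map_sum]

theorem pgrad_lagr (i : Fin n) : pgrad (lagr f h p) x i =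
    ∑ k, p.1 k * pgrad (f k) x i + ∑ j, p.2 j * pgrad (h j) x i := by
  simp [pgrad, lagr, map_sum, pderiv_C_mul]

theorem phess_lagr : -(phess (lagr f h p) x) = Matrix.of (fun i i' : Fin n =>
      -(∑ k, p.1 k * phess (f k) x i i') - ∑ j, p.2 j * phess (h j) x i i') := by
  ext i j
  simp [phess, lagr, map_sum, pderiv_C_mul]
  ring

end Lagr

theorem local_srep {n m1 m2 : ℕ} (f : Fin m1 → MvPolynomial (Fin n) ℝ)
    (h : Fin m2 → MvPolynomial (Fin n) ℝ) (T : Set (Rn n))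
    (hT : T = {x : Rn n | (∀ i, peval (f i) x = 0) ∧ ∀ j, 0 ≤ peval (h j) x})
    (hTc : IsCompact T) (u : Rn n) (δ : ℝ) (hδ : 0 < δ) (hp : PDLHAt f h T u δ) :
    SRep (convexHull ℝ (T ∩ closedBall u δ)) := by
  classical
  set E := extFamily h u δ with hE
  have hEP : ∀ x ∈ T ∩ closedBall u δ, ∀ j, 0 ≤ peval (E j) x := by
    rintro x ⟨hx, hxb⟩ j
    rw [hT] at hx
    refine Fin.lastCases ?_ (fun j => ?_) j
    · simp only [hE, extFamily, Fin.snoc_last]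
      exact (mem_closedBall_iff_ballPoly u hδ x).mp hxb
    · simp only [hE, extFamily, Fin.snoc_castSucc]
      exact hx.2 j
  let Good : Finset (Fin (m2 + 1)) → (Fin m1 → ℝ) × (Fin (m2 + 1) → ℝ) → Prop := fun I p =>
    (∀ j, 0 ≤ p.2 j) ∧ (∀ j, j ∉ I → p.2 j = 0) ∧
      ∀ x ∈ closedBall u δ, (-(phess (lagr f E p) x)).PosDef
  let G : Option (Finset (Fin (m2 + 1))) → MvPolynomial (Fin n) ℝ := fun o =>
    match o with
    | none => ballPoly u δ
    | some I => if hI : ∃ p, Good I p then lagr f E hI.choose else ballPoly u δ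
  have hLP : ∀ p : (Fin m1 → ℝ) × (Fin (m2 + 1) → ℝ), (∀ j, 0 ≤ p.2 j) →
      ∀ x ∈ T ∩ closedBall u δ, 0 ≤ peval (lagr f E p) x := by
    intro p hp0 x hx
    rw [peval_lagr]
    have h1 : ∀ k, peval (f k) x = 0 := by
      have := hx.1
      rw [hT] at this
      exact this.1
    simp only [h1, mul_zero, Finset.sum_const_zero, zero_add]
    exact Finset.sum_nonneg fun j _ => mul_nonneg (hp0 j) (hEP x hx j)
  have hLv : ∀ p : (Fin m1 → ℝ) × (Fin (m2 + 1) → ℝ),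
      ∀ x ∈ T ∩ closedBall u δ, (∀ j, p.2 j * peval (E j) x = 0) → peval (lagr f E p) x = 0 := by
    intro p x hx hz
    rw [peval_lagr]
    have h1 : ∀ k, peval (f k) x = 0 := by
      have := hx.1
      rw [hT] at this
      exact this.1
    simp [h1, hz]
  have hball : Convex ℝ (closedBall u δ) := convex_closedBall u δ
  refine hull_srep G hball (hTc.inter_right isClosed_closedBall) inter_subset_right ?_ ?_ ?_ ?_ ?_
  · intro x hx
    exact (mem_closedBall_iff_ballPoly u hδ x).mpr (hx none)
  · intro o x hx
    match o with
    | none => exact phess_ballPoly u δ x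
    | some I =>
      by_cases hI : ∃ p, Good I p
      · simp only [G, dif_pos hI]
        exact hI.choose_spec.2.2 x hx
      · simp only [G, dif_neg hI]
        exact phess_ballPoly u δ x
  · intro o x hx
    match o with
    | none => exact (mem_closedBall_iff_ballPoly u hδ x).mp hx.2
    | some I =>
      by_cases hI : ∃ p, Good I p
      · simp only [G, dif_pos hI]
        exact hLP _ hI.choose_spec.1 x hx
      · simp only [G, dif_neg hI]
        exact (mem_closedBall_iff_ballPoly u hδ x).mp hx.2
  · intro l hl v hv w hw hvm hwm
    by_contra hvw
    obtain ⟨lam, mu, hmu, hcomp, hgrad, hpd⟩ := hp l hl δ hδ le_rfl v hv hvm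
    have hpd' : ∀ x ∈ closedBall u δ, (-(phess (lagr f E (lam, mu)) x)).PosDef := by
      intro x hx
      rw [phess_lagr]
      exact hpd x hx
    have h1 := grad_ineq hball hpd' hv.2 hw.2 hvw
    have h2 := hLP (lam, mu) hmu w hw
    have h3 := hLv (lam, mu) v hv hcomp
    have h4 : ∑ i, pgrad (lagr f E (lam, mu)) v i * (w i - v i) =
        ∑ i, l i * w i - ∑ i, l i * v i := by
      rw [← Finset.sum_sub_distrib]
      refine Finset.sum_congr rfl fun i _ => ?_
      rw [pgrad_lagr, ← hgrad i]; ring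
    have h5 := hwm v hv
    linarith
  · intro l hl v hv hvm
    obtain ⟨lam, mu, hmu, hcomp, hgrad, hpd⟩ := hp l hl δ hδ le_rfl v hv hvm
    have hpd' : ∀ x ∈ closedBall u δ, (-(phess (lagr f E (lam, mu)) x)).PosDef := by
      intro x hx
      rw [phess_lagr]
      exact hpd x hx
    set I : Finset (Fin (m2 + 1)) := Finset.univ.filter fun j => peval (E j) v = 0 with hIdef
    have hI : ∃ p, Good I p := by
      refine ⟨(lam, mu), hmu, fun j hj => ?_, hpd'⟩
      have hj' : peval (E j) v ≠ 0 := by simpa [hIdef] using hj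
      exact (mul_eq_zero.mp (hcomp j)).resolve_right hj'
    refine ⟨some I, ?_⟩
    simp only [G, dif_pos hI]
    refine hLv _ v hv fun j => ?_
    by_cases hj : j ∈ I
    · have hj' : peval (E j) v = 0 := by simpa [hIdef] using hj
      rw [hj', mul_zero]
    · rw [hI.choose_spec.2.1 j hj, zero_mul]

/-! ### Part 8: global assembly -/

theorem main_srep {n L : ℕ}
    (m1 m2 : Fin L → ℕ)
    (f : ∀ k, Fin (m1 k) → MvPolynomial (Fin n) ℝ)
    (h : ∀ k, Fin (m2 k) → MvPolynomial (Fin n) ℝ)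
    (T : Fin L → Set (Rn n))
    (hT : ∀ k, T k = {x : Rn n | (∀ i, peval (f k i) x = 0) ∧ ∀ j, 0 ≤ peval (h k j) x})
    (Tun : Set (Rn n)) (hTun : Tun = ⋃ k, T k) (hcpt : IsCompact Tun)
    (hpdlh : ∀ k : Fin L, ∀ u ∈ convexBoundary Tun ∩ frontier (T k),
      ∃ δu > 0, PDLHAt (f k) (h k) (T k) u δu) :
    SRep (convexHull ℝ Tun) := by
  classical
  rcases Nat.eq_zero_or_pos n with hn | hn
  · subst hn
    rcases Tun.eq_empty_or_nonempty with rfl | ⟨x, hx⟩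
    · rw [convexHull_empty]; exact SRep.empty
    · have : convexHull ℝ Tun = {x} := by
        apply Subset.antisymm
        · intro y _; exact Subsingleton.elim y x
        · rintro y rfl; exact subset_convexHull ℝ Tun hx
      rw [this]; exact SRep.singleton x
  have hcl : ∀ k, IsClosed (T k) := by
    intro k
    have e : T k = (⋂ i, {x | peval (f k i) x = 0}) ∩ ⋂ j, {x | 0 ≤ peval (h k j) x} := by
      rw [hT k]; ext x; simp
    rw [e]
    refine (isClosed_iInter fun i => ?_).inter (isClosed_iInter fun j => ?_)
    · exact isClosed_eq (continuous_peval _) continuous_const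
    · exact isClosed_le continuous_const (continuous_peval _)
  have hsub : ∀ k, T k ⊆ Tun := fun k => hTun ▸ subset_iUnion T k
  have hTk : ∀ k, IsCompact (T k) := fun k => hcpt.of_isClosed_subset (hcl k) (hsub k)
  -- points of the convex boundary are on the frontier of each piece
  have hfront : ∀ k, ∀ u ∈ convexBoundary Tun, u ∈ T k → u ∈ frontier (T k) := by
    rintro k u ⟨_, l, hl, hmin⟩ huk
    rw [(hcl k).frontier_eq]
    refine ⟨huk, fun hinter => ?_⟩
    have hc : ContinuousAt (fun t : ℝ => u + t • (-l)) 0 := by fun_prop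
    have h0 : interior (T k) ∈ nhds ((fun t : ℝ => u + t • (-l)) 0) := by
      simpa using isOpen_interior.mem_nhds hinter
    have hev : ∀ᶠ t in nhdsWithin (0 : ℝ) (Ioi 0), u + t • (-l) ∈ interior (T k) :=
      (hc.eventually h0).filter_mono nhdsWithin_le_nhds
    obtain ⟨t, ht, htp⟩ := (hev.and self_mem_nhdsWithin).exists
    have h1 := hmin _ (hsub k (interior_subset ht))
    rw [sum_eq_inner, sum_eq_inner, inner_add_right, inner_smul_right, inner_neg_right,
      real_inner_self_eq_norm_sq, hl] at h1
    have : (0 : ℝ) < t := htp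
    linarith
  have hchoice : ∀ k, ∀ u ∈ convexBoundary Tun ∩ T k,
      ∃ δ > 0, SRep (convexHull ℝ (T k ∩ closedBall u δ)) := by
    rintro k u ⟨hu, huk⟩
    obtain ⟨δ, hδ, hp⟩ := hpdlh k u ⟨hu, hfront k u hu huk⟩
    exact ⟨δ, hδ, local_srep (f k) (h k) (T k) (hT k) (hTk k) u δ hδ hp⟩
  choose! δ hδ hS using hchoice
  -- the convex boundary is compact
  have hbc : IsCompact (convexBoundary Tun) := by
    have e : convexBoundary Tun = Prod.fst '' ((Tun ×ˢ sphere (0 : Rn n) 1) ∩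
        ⋂ x ∈ Tun, {q : Rn n × Rn n | ∑ i, q.2 i * q.1 i ≤ ∑ i, q.2 i * x i}) := by
      ext u
      constructor
      · rintro ⟨hu, l, hl, hmin⟩
        refine ⟨(u, l), ⟨⟨hu, by simpa using hl⟩, ?_⟩, rfl⟩
        simpa using hmin
      · rintro ⟨⟨u, l⟩, ⟨⟨hu, hl⟩, hmin⟩, rfl⟩
        refine ⟨hu, l, by simpa using hl, ?_⟩
        simpa using hmin
    rw [e]
    refine IsCompact.image ?_ continuous_fst
    refine (hcpt.prod (isCompact_sphere _ _)).inter_right ?_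
    refine isClosed_biInter fun x _ => ?_
    exact isClosed_le (by fun_prop) (by fun_prop)
  have hcover : ∀ k, ∃ t : Finset (Rn n), (∀ u ∈ t, u ∈ convexBoundary Tun ∩ T k) ∧
      convexBoundary Tun ∩ T k ⊆ ⋃ u ∈ t, closedBall u (δ k u) := by
    intro k
    exact (hbc.inter_right (hcl k)).elim_nhds_subcover (fun u => closedBall u (δ k u))
      fun u hu => closedBall_mem_nhds u (hδ k u hu)
  choose t ht htc using hcover
  set I : Finset (Σ _ : Fin L, Rn n) := Finset.univ.sigma t with hI
  have hmemI : ∀ q ∈ I, q.2 ∈ convexBoundary Tun ∩ T q.1 := by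
    intro q hq
    exact ht q.1 q.2 (Finset.mem_sigma.mp hq).2
  have hPc : ∀ q : Σ _ : Fin L, Rn n, IsCompact (T q.1 ∩ closedBall q.2 (δ q.1 q.2)) :=
    fun q => (hTk q.1).inter_right isClosed_closedBall
  have hK := (SRep.convexHull_biUnion I
    (S := fun q => convexHull ℝ (T q.1 ∩ closedBall q.2 (δ q.1 q.2)))
    (fun q hq => hS q.1 q.2 (hmemI q hq))
    (fun q _ => (isCompact_hull (hPc q)).isBounded)).1
  set R : Set (Rn n) := ⋃ q ∈ I, T q.1 ∩ closedBall q.2 (δ q.1 q.2) with hR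
  have hRc : IsCompact R := I.isCompact_biUnion fun q _ => hPc q
  have hKR : convexHull ℝ (⋃ q ∈ I, convexHull ℝ (T q.1 ∩ closedBall q.2 (δ q.1 q.2))) =
      convexHull ℝ R := by
    apply Subset.antisymm
    · refine convexHull_min (iUnion₂_subset fun q hq => convexHull_mono ?_) (convex_convexHull ℝ R)
      exact subset_iUnion₂ (s := fun q (_ : q ∈ I) => T q.1 ∩ closedBall q.2 (δ q.1 q.2)) q hq
    · exact convexHull_mono (iUnion₂_mono fun q _ => subset_convexHull ℝ _)
  rw [hKR] at hK
  have hbR : convexBoundary Tun ⊆ R := by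
    intro u hu
    have huT := hu.1
    rw [hTun, mem_iUnion] at huT
    obtain ⟨k, hk⟩ := huT
    have := htc k ⟨hu, hk⟩
    simp only [mem_iUnion, exists_prop] at this
    obtain ⟨w, hw, huw⟩ := this
    exact mem_iUnion₂.mpr ⟨⟨k, w⟩, Finset.mem_sigma.mpr ⟨Finset.mem_univ k, hw⟩, hk, huw⟩
  have hRT : R ⊆ Tun := iUnion₂_subset fun q _ => inter_subset_left.trans (hsub q.1)
  have hmin : ∀ φ : Rn n →L[ℝ] ℝ, φ ≠ 0 → Tun.Nonempty →
      ∃ u ∈ R, ∀ x ∈ Tun, φ u ≤ φ x := by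
    intro φ hφ hne
    obtain ⟨u, hu, hum⟩ := hcpt.exists_isMinOn hne φ.continuous.continuousOn
    obtain ⟨l, hl, c, hc, hlx⟩ := unit_functional φ hφ
    refine ⟨u, hbR ⟨hu, l, hl, fun x hx => ?_⟩, fun x hx => hum hx⟩
    rw [hlx, hlx]
    exact mul_le_mul_of_nonneg_left (hum hx) hc.le
  have hfin : convexHull ℝ Tun = convexHull ℝ R := by
    apply Subset.antisymm
    · refine convexHull_min ?_ (convex_convexHull ℝ R)
      intro x hx
      by_contra hxR
      obtain ⟨φ, s, h1, h2⟩ := geometric_hahn_banach_point_closed (convex_convexHull ℝ R)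
        (isCompact_hull hRc).isClosed hxR
      by_cases hφ : φ = 0
      · -- then the hull is empty, and any nonzero functional gives a contradiction
        have hne : ∃ ψ : Rn n →L[ℝ] ℝ, ψ ≠ 0 := by
          refine ⟨EuclideanSpace.proj ⟨0, hn⟩, fun h0 => ?_⟩
          have := congrArg (fun ψ : Rn n →L[ℝ] ℝ =>
            ψ (EuclideanSpace.single (⟨0, hn⟩ : Fin n) (1 : ℝ))) h0
          simp at this
        obtain ⟨ψ, hψ⟩ := hne
        obtain ⟨u, hu, _⟩ := hmin ψ hψ ⟨x, hx⟩
        have h3 := h2 u (subset_convexHull ℝ R hu)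
        rw [hφ] at h1 h3
        simp at h1 h3
        linarith
      · obtain ⟨u, hu, hum⟩ := hmin φ hφ ⟨x, hx⟩
        have h3 := h2 u (subset_convexHull ℝ R hu)
        have h4 := hum x hx
        linarith
    · exact convexHull_mono hRT
  rw [hfin]
  exact hK

/-- if each `Tₖ` satisfies the PDLH condition at every point of
`∂_cT ∩ ∂Tₖ`, then `conv(T)` is SDP representable, where `T = ⋃ₖ Tₖ`. -/
theorem isSDPRepresentable_convexHull_union_of_PDLH {n L : ℕ}
    (m1 m2 : Fin L → ℕ)
    (f : ∀ k, Fin (m1 k) → MvPolynomial (Fin n) ℝ)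
    (h : ∀ k, Fin (m2 k) → MvPolynomial (Fin n) ℝ)
    (T : Fin L → Set (Rn n))
    (hT : ∀ k, T k = {x : Rn n | (∀ i, peval (f k i) x = 0) ∧ ∀ j, 0 ≤ peval (h k j) x})
    (Tun : Set (Rn n)) (hTun : Tun = ⋃ k, T k) (hcpt : IsCompact Tun)
    (hpdlh : ∀ k : Fin L, ∀ u ∈ convexBoundary Tun ∩ frontier (T k),
      ∃ δu > 0, PDLHAt (f k) (h k) (T k) u δu) :
    IsSDPRepresentable (convexHull ℝ Tun) := by
  exact (main_srep m1 m2 f h T hT Tun hTun hcpt hpdlh).isSDPRepresentable
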